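/- Main theorem: a system of elements {g_1,...,g_k} (1 ≤ k ≤ n) of the free metabelian Lie ring M on n generators is primitive if and only if it is uniformly distributed on the variety of metabelian Lie rings, i.e. for every finite metabelian Lie ring R and every tuple p ∈ R^k, the number of n-tuples r ∈ R^n with (g_1(r),...,g_k(r)) = p is exactly |R|^{n−k}. -/

import Mathlib

/-- The free metabelian Lie ring `M` on `x₁,…,xₙ`: the quotient of the free Lie ring by
the second derived ideal. -/
abbrev M (n : ℕ) :=
  FreeLieAlgebra ℤ (Fin n) ⧸ LieAlgebra.derivedSeries ℤ (FreeLieAlgebra ℤ (Fin n)) 2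

/-- The natural projection `L → M`. -/
noncomputable def mkM (n : ℕ) : FreeLieAlgebra ℤ (Fin n) → M n := LieSubmodule.Quotient.mk

/-- `h` is a system of free generators of the free metabelian Lie ring `M`. -/
def IsFreeGenSet (n : ℕ) (h : Fin n → M n) : Prop :=
  ∀ (A : Type) [LieRing A] [LieAlgebra ℤ A],
    (∀ a b c d : A, ⁅⁅a, b⁆, ⁅c, d⁆⁆ = 0) →
      ∀ f : Fin n → A, ∃! φ : M n →ₗ⁅ℤ⁆ A, ∀ i, φ (h i) = f i

/-- A system of elements of `M` is primitive if it can be completed to a system of free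
generators of `M`. -/
def IsPrimitiveSystem (n k : ℕ) (hk : k ≤ n) (g : Fin k → M n) : Prop :=
  ∃ h : Fin n → M n, IsFreeGenSet n h ∧ ∀ j : Fin k, h (Fin.castLE hk j) = g j

/-- A system of Lie polynomials `g₁,…,g_k` is uniformly distributed on the variety of
metabelian Lie rings: for every finite metabelian Lie ring `R` and every tuple
`p ∈ R^k`, the number of `n`-tuples `r ∈ R^n` with `(g₁(r),…,g_k(r)) = p` is exactly
`|R|^{n−k}`.  (Evaluation of a Lie polynomial is by the universal property of the free
Lie ring; on a metabelian ring it only depends on the image in `M`.) -/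
def IsUniformlyDistributed (n k : ℕ) (g : Fin k → FreeLieAlgebra ℤ (Fin n)) : Prop :=
  ∀ (R : Type) [LieRing R] [LieAlgebra ℤ R] [Fintype R],
    (∀ a b c d : R, ⁅⁅a, b⁆, ⁅c, d⁆⁆ = 0) →
      ∀ pv : Fin k → R,
        Nat.card {r : Fin n → R // ∀ j, (FreeLieAlgebra.lift ℤ r) (g j) = pv j} =
          Fintype.card R ^ (n - k)

/-!
The Magnus embedding identifies `M` with the pairs `(a, f)`, where `a ∈ ℤⁿ` is a linear part,
`f ∈ ℤ[X₁, …, Xₙ]ⁿ` is the row of Fox derivatives, and `∑ fᵢ Xᵢ = ∑ aᵢ Xᵢ`. A primitive system is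
the first part of a change of variables in `Rⁿ`, so it is uniformly distributed. Conversely,
counting on the split extensions `F ⋉ F`, for the residue fields `F` of `ℤ[X₁, …, Xₙ]`, all of them
finite, shows that the Jacobian of a uniformly distributed system is surjective at every maximal
ideal and hence right invertible. By the Quillen–Suslin theorem its rows can be completed to an
invertible matrix; the augmentation relation `∑ fᵢ Xᵢ = ∑ aᵢ Xᵢ` can be preserved because the
Koszul complex of the variables is exact. The rows of the completed matrix are the images of a
system of free generators of `M`.
-/

namespace FreeMetabelian

open Matrix

section GLEquiv

variable {R S ι κ : Type*} [CommRing R] [CommRing S] [Fintype ι] [Fintype κ]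

/-- Unimodular vectors: the entries generate the unit ideal. -/
def IsUnimodular (v : ι → R) : Prop := ∃ w : ι → R, w ⬝ᵥ v = 1

lemma map_dotProduct {F : Type*} [FunLike F R S] [RingHomClass F R S] (f : F) (v w : ι → R) :
    f (v ⬝ᵥ w) = (fun i ↦ f (v i)) ⬝ᵥ fun i ↦ f (w i) := by
  simp only [dotProduct, map_sum, map_mul]

lemma map_mulVec {μ F : Type*} [FunLike F R S] [RingHomClass F R S] (f : F) (A : Matrix μ ι R)
    (v : ι → R) (i : μ) : f ((A *ᵥ v) i) = (A.map f *ᵥ fun j ↦ f (v j)) i :=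
  map_dotProduct f _ _

lemma exists_dotProduct_eq_of_mem_span {v : ι → R} {x : R} (h : x ∈ Ideal.span (Set.range v)) :
    ∃ w : ι → R, w ⬝ᵥ v = x := by
  simpa [dotProduct] using (Ideal.mem_span_range_iff_exists_fun).1 h

lemma IsUnimodular.map {v : ι → R} (h : IsUnimodular v) (f : R →+* S) :
    IsUnimodular fun i ↦ f (v i) := by
  obtain ⟨w, hw⟩ := h
  exact ⟨fun i ↦ f (w i), by rw [← map_dotProduct, hw, map_one]⟩

lemma IsUnimodular.isUnit_of_eq_smul {v u : ι → R} {α : R} (h : IsUnimodular v)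
    (hv : v = α • u) : IsUnit α := by
  obtain ⟨w, hw⟩ := h
  refine IsUnit.of_mul_eq_one (w ⬝ᵥ u) ?_
  rw [← smul_eq_mul, ← dotProduct_smul, ← hv, hw]

lemma IsUnimodular.comp_equiv {v : ι → R} (h : IsUnimodular v) (e : κ ≃ ι) :
    IsUnimodular (v ∘ e) := by
  obtain ⟨w, hw⟩ := h
  exact ⟨w ∘ e, by rw [comp_equiv_dotProduct_comp_equiv, hw]⟩

variable [DecidableEq ι] [DecidableEq κ]

lemma isUnit_det_coe (G : GL ι R) : IsUnit (G : Matrix ι ι R).det := G.isUnit.map detMonoidHom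

/-- Two vectors are equivalent if they lie in the same orbit of the general linear group. -/
def GLEquiv (a b : ι → R) : Prop := ∃ G : GL ι R, (G : Matrix ι ι R) *ᵥ a = b

namespace GLEquiv

variable {a b c : ι → R}

lemma of_isUnit_det {G : Matrix ι ι R} (hG : IsUnit G.det) (a : ι → R) : GLEquiv a (G *ᵥ a) :=
  ⟨GeneralLinearGroup.mk'' G hG, rfl⟩

lemma refl (a : ι → R) : GLEquiv a a := ⟨1, one_mulVec a⟩

lemma trans (h : GLEquiv a b) (h' : GLEquiv b c) : GLEquiv a c := by
  obtain ⟨G, rfl⟩ := h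
  obtain ⟨H, rfl⟩ := h'
  exact ⟨H * G, (mulVec_mulVec a H.1 G.1).symm⟩

lemma symm (h : GLEquiv a b) : GLEquiv b a := by
  obtain ⟨G, rfl⟩ := h
  exact ⟨G⁻¹, by rw [mulVec_mulVec, Units.inv_mul, one_mulVec]⟩

lemma map (f : R →+* S) (h : GLEquiv a b) : GLEquiv (fun i ↦ f (a i)) (fun i ↦ f (b i)) := by
  obtain ⟨G, rfl⟩ := h
  exact ⟨GeneralLinearGroup.map f G, funext fun i ↦ (map_mulVec f G.1 a i).symm⟩

lemma smul (h : GLEquiv a b) (c : R) : GLEquiv (c • a) (c • b) := by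
  obtain ⟨G, rfl⟩ := h
  exact ⟨G, mulVec_smul _ c a⟩

lemma comp_equiv (e : κ ≃ ι) (h : GLEquiv a b) : GLEquiv (a ∘ e) (b ∘ e) := by
  obtain ⟨G, rfl⟩ := h
  have hdet : IsUnit (G.1.submatrix e e).det := by
    rw [det_submatrix_equiv_self]
    exact isUnit_det_coe G
  convert of_isUnit_det hdet (a ∘ e)
  rw [submatrix_mulVec_equiv]
  simp [Function.comp_assoc]

lemma of_comp_equiv (e : κ ≃ ι) (h : GLEquiv (a ∘ e) (b ∘ e)) : GLEquiv a b := by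
  simpa [Function.comp_assoc] using h.comp_equiv e.symm

lemma span_range_le (h : GLEquiv a b) :
    Ideal.span (Set.range b) ≤ Ideal.span (Set.range a) := by
  obtain ⟨G, rfl⟩ := h
  rw [Ideal.span_le]
  rintro _ ⟨i, rfl⟩
  exact Ideal.mem_span_range_iff_exists_fun.2 ⟨G.1 i, rfl⟩

lemma span_range_eq (h : GLEquiv a b) :
    Ideal.span (Set.range a) = Ideal.span (Set.range b) :=
  h.symm.span_range_le.antisymm h.span_range_le

lemma sumElim_add_mulVec (a : ι → R) (b : κ → R) (N : Matrix κ ι R) :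
    GLEquiv (Sum.elim a b) (Sum.elim a (b + N *ᵥ a)) := by
  have hdet : IsUnit (fromBlocks 1 0 N 1).det := by simp
  convert of_isUnit_det hdet (Sum.elim a b)
  simp [fromBlocks_mulVec, add_comm]

lemma sumElim_left (a : ι → R) {b b' : κ → R} (h : GLEquiv b b') :
    GLEquiv (Sum.elim a b) (Sum.elim a b') := by
  obtain ⟨G, rfl⟩ := h
  have hdet : IsUnit (fromBlocks (1 : Matrix ι ι R) 0 0 G.1).det := by
    rw [det_fromBlocks_zero₁₂, det_one, one_mul]
    exact isUnit_det_coe G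
  convert of_isUnit_det hdet (Sum.elim a b)
  simp [fromBlocks_mulVec]

lemma exists_map_apply_eq {i₀ : ι} (h : GLEquiv (Pi.single i₀ 1) a) :
    ∃ G : GL ι R, ∀ i, G i i₀ = a i := by
  obtain ⟨G, rfl⟩ := h
  exact ⟨G, fun i ↦ by simp⟩

lemma of_col_eq {D : Matrix ι ι R} (hD : IsUnit D.det) {i₀ : ι} (h : D.col i₀ = a) :
    GLEquiv (Pi.single i₀ 1) a := by
  rw [← h, ← mulVec_single_one]
  exact of_isUnit_det hD _

end GLEquiv

end GLEquiv

section Hermite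

/-- Hermite rings in the sense of Lam: every unimodular vector is the first column of an
invertible matrix. -/
def IsHermite (R : Type*) [CommRing R] : Prop :=
  ∀ (m : ℕ) (v : Fin (m + 1) → R), IsUnimodular v → GLEquiv (Pi.single 0 1) v

variable {R S ι : Type*} [CommRing R] [CommRing S] [Fintype ι] [DecidableEq ι]

lemma IsHermite.of_ringEquiv (h : IsHermite R) (e : R ≃+* S) : IsHermite S := by
  intro m v hv
  convert (h m _ (hv.map e.symm.toRingHom)).map e.toRingHom using 1
  · ext i
    simp [Pi.single_apply]
  · ext i
    simp

lemma IsHermite.glEquiv_single (hR : IsHermite R) (i₀ : ι) {v : ι → R} (hv : IsUnimodular v) :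
    GLEquiv (Pi.single i₀ 1) v := by
  obtain ⟨m, hm⟩ : ∃ m, Fintype.card ι = m + 1 :=
    Nat.exists_eq_succ_of_ne_zero (Fintype.card_pos_iff.2 ⟨i₀⟩).ne'
  let e₁ : ι ≃ Fin (m + 1) := Fintype.equivFinOfCardEq hm
  let e : ι ≃ Fin (m + 1) := e₁.trans (Equiv.swap (e₁ i₀) 0)
  have he : e.symm 0 = i₀ := by simp [e]
  refine GLEquiv.of_comp_equiv e.symm ?_
  rw [← he, Pi.single_comp_equiv e.symm, Equiv.symm_apply_apply]
  exact hR m _ (hv.comp_equiv e.symm)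

variable [IsDomain R] [IsPrincipalIdealRing R]

lemma exists_glEquiv_single (i₀ : ι) (y : ι → R) : ∃ α : R, GLEquiv (Pi.single i₀ α) y := by
  obtain ⟨n, snf⟩ := (Submodule.span R {y}).smithNormalForm (Pi.basisFun R ι)
  obtain ⟨i₁, hi₁⟩ : ∃ i₁, ∀ i ≠ i₁, snf.bM.repr y i = 0 := by
    have hn : n ≤ 1 := by
      simpa [Module.finrank_eq_card_basis snf.bN] using finrank_span_le_card (R := R) {y}
    have hy := fun i hi ↦
      snf.repr_eq_zero_of_notMem_range (i := i) hi (m := ⟨y, Submodule.mem_span_singleton_self y⟩)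
    have : Subsingleton (Fin n) := Fin.subsingleton_iff_le_one.2 hn
    rcases isEmpty_or_nonempty (Fin n) with h | ⟨⟨j⟩⟩
    · exact ⟨i₀, fun i _ ↦ hy i (by simp)⟩
    · exact ⟨snf.f j, fun i hi ↦ hy i fun ⟨k, hk⟩ ↦ hi (by rw [← hk, Subsingleton.elim k j])⟩
  let b := snf.bM.reindex (Equiv.swap i₁ i₀)
  have hy : b.repr y = Finsupp.single i₀ (snf.bM.repr y i₁) := by
    ext i
    by_cases hi : i = i₀
    · simp [b, hi]
    · rw [Finsupp.single_eq_of_ne hi, Module.Basis.repr_reindex_apply, Equiv.symm_swap, hi₁]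
      exact fun h ↦ hi (by simpa using congrArg (Equiv.swap i₁ i₀) h)
  let e := Pi.basisFun R ι
  have hdet : IsUnit (e.toMatrix b).det := e.isUnit_det b
  refine ⟨snf.bM.repr y i₁, ?_⟩
  convert GLEquiv.of_isUnit_det hdet _ using 1
  rw [← Finsupp.single_eq_pi_single, ← hy]
  exact (b.toMatrix_mulVec_repr e y).symm

lemma IsHermite.of_isPrincipalIdealRing : IsHermite R := by
  intro m v hv
  obtain ⟨α, G, hG⟩ := exists_glEquiv_single 0 v
  have hα : IsUnit α := hv.isUnit_of_eq_smul (u := G.1.col 0) (by rw [← hG]; simp)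
  refine GLEquiv.of_col_eq (D := G.1 * diagonal fun _ ↦ α) ?_ (i₀ := 0) ?_
  · simpa using hα
  · rw [← hG]
    ext i
    simp

end Hermite

section Triangular

open Polynomial

variable {R : Type*} [CommRing R]

lemma isUnit_det_cons_single {n : ℕ} (G : GL (Fin n) R) :
    IsUnit (of (Fin.cons (Pi.single 0 1) fun i ↦ Fin.cons 0 (G.1 i)) :
      Matrix (Fin (n + 1)) (Fin (n + 1)) R).det := by
  convert isUnit_det_coe G using 1
  rw [det_succ_row_zero, Fin.sum_univ_succ]
  simp [submatrix]
  rfl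

lemma exists_eq_mul_upperTriangular [IsDomain R] [IsPrincipalIdealRing R] {m n : ℕ}
    (A : Matrix (Fin m) (Fin n) R) :
    ∃ (G : GL (Fin m) R) (U : Matrix (Fin m) (Fin n) R),
      A = G.1 * U ∧ ∀ (i : Fin m) (j : Fin n), (j : ℕ) < i → U i j = 0 := by
  induction n generalizing m with
  | zero => exact ⟨1, A, by simp, fun _ j ↦ j.elim0⟩
  | succ n ih =>
    rcases m with _ | m
    · exact ⟨1, A, by simp, fun i ↦ i.elim0⟩
    obtain ⟨α, G, hG⟩ := exists_glEquiv_single 0 (A.col 0)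
    set A' := G⁻¹.1 * A with hA'
    have hcol : A'.col 0 = Pi.single 0 α := by
      rw [hA', ← mulVec_single_one, ← mulVec_mulVec, mulVec_single_one, ← hG, mulVec_mulVec,
        Units.inv_mul, one_mulVec]
    obtain ⟨H, U, hHU, hU⟩ := ih (A'.submatrix Fin.succ Fin.succ)
    let K := GeneralLinearGroup.mk'' _ (isUnit_det_cons_single H)
    let V : Matrix (Fin (m + 1)) (Fin (n + 1)) R := of (Fin.cons (A' 0) fun i ↦ Fin.cons 0 (U i))
    refine ⟨G * K, V, ?_, fun i j hij ↦ ?_⟩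
    · have hK : A' = K.1 * V := by
        ext i j
        refine Fin.cases ?_ (fun i ↦ ?_) i
        · simp [K, V, mul_apply, Pi.single_apply]
        refine Fin.cases ?_ (fun j ↦ ?_) j
        · simpa [K, V, mul_apply, Fin.sum_univ_succ] using congrFun hcol i.succ
        · simpa [K, V, mul_apply, Fin.sum_univ_succ] using congrFun₂ hHU i j
      rw [Units.val_mul, Matrix.mul_assoc, ← hK, hA', ← Matrix.mul_assoc, Units.mul_inv,
        Matrix.one_mul]
    · induction i using Fin.cases with
      | zero => simp at hij
      | succ i =>
        induction j using Fin.cases with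
        | zero => rfl
        | succ j => exact hU i j (by simpa using hij)

lemma isUnit_det_of_eq_mul_upperTriangular {m : ℕ} {D N : Matrix (Fin (m + 2)) (Fin (m + 2)) R}
    {E : GL (Fin (m + 2)) R} {U : Matrix (Fin (m + 2)) (Fin (m + 1)) R} {x : R}
    (hD : IsUnimodular (D.col 0)) (hDU : D.submatrix id (Fin.succAbove 1) = E.1 * U)
    (hU : ∀ (i : Fin (m + 2)) (j : Fin (m + 1)), (j : ℕ) < i → U i j = 0)
    (h0 : N.col 0 = D.col 0) (h1 : N.col 1 = E.1.col 1)
    (h : ∀ j : Fin m, N.col j.succ.succ = E.1.col j.succ.succ + x • D.col j.succ.succ) :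
    IsUnit N.det := by
  let T : Matrix (Fin (m + 2)) (Fin (m + 2)) R := of fun i ↦
    Fin.cons (U i 0) (Fin.cons (if i = 1 then 1 else 0) fun j ↦
      (if i = j.succ.succ then 1 else 0) + x * U i j.succ)
  have hD0 : D.col 0 = E.1 *ᵥ U.col 0 := funext fun i ↦ congrFun₂ hDU i 0
  have hDj (j : Fin m) : D.col j.succ.succ = E.1 *ᵥ U.col j.succ :=
    funext fun i ↦ congrFun₂ hDU i j.succ
  have hU0 : U.col 0 = U 0 0 • Pi.single 0 1 := by
    ext i
    refine Fin.cases (by simp) (fun i ↦ ?_) i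
    simpa using hU i.succ 0 (by simp)
  have hunit : IsUnit (U 0 0) :=
    hD.isUnit_of_eq_smul (u := E.1 *ᵥ Pi.single 0 1) (by rw [hD0, hU0, mulVec_smul])
  have hNT : N = E.1 * T := by
    ext i j
    refine Fin.cases ?_ (Fin.cases ?_ fun j ↦ ?_) j
    · exact congrFun (h0.trans hD0) i
    · simpa [T, mul_apply, Pi.single_apply] using congrFun h1 i
    · simpa [T, mul_apply, hDj, mulVec, dotProduct, Pi.single_apply, mul_add,
        Finset.sum_add_distrib, Finset.mul_sum, mul_left_comm] using congrFun (h j) i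
  have hT : T.BlockTriangular id := by
    intro i j (hij : j < i)
    induction j using Fin.cases with
    | zero => exact hU i 0 hij
    | succ j =>
      induction j using Fin.cases with
      | zero =>
        have hi : i ≠ 1 := hij.ne'
        simp [T, hi]
      | succ j =>
        have hj : (j.succ : ℕ) < i := (Nat.lt_succ_self _).trans hij
        simp [T, hij.ne', hU i j.succ hj]
  have hTdet : T.det = U 0 0 := by
    have hUj (j : Fin m) : U j.succ.succ j.succ = 0 := hU _ _ (by simp)
    simp [det_of_isUpperTriangular hT, Fin.prod_univ_succ, T, hUj]
  rw [hNT, det_mul, hTdet]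
  exact (isUnit_det_coe E).mul hunit

end Triangular

section Horrocks

open Polynomial

variable {B : Type*} [CommRing B]

lemma exists_monic_eval_X_pow {p : B[X][X]} {m : ℕ} (h : p.natDegree ≤ m)
    (hm : (p.coeff m).Monic) : ∃ L : ℕ, (p.eval (X ^ L)).Monic := by
  nontriviality B
  let L := (Finset.range m).sup (fun i ↦ (p.coeff i).natDegree) + 1
  have hL : ∀ i < m, (p.coeff i).natDegree < L := fun i hi ↦
    Nat.lt_succ_of_le (Finset.le_sup (f := fun i ↦ (p.coeff i).natDegree) (Finset.mem_range.2 hi))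
  refine ⟨L, ?_⟩
  rw [eval_eq_sum_range' (Nat.lt_succ_of_le h), Finset.sum_range_succ, add_comm]
  simp only [← pow_mul]
  have hmon : (p.coeff m * X ^ (L * m)).Monic := hm.mul (monic_X_pow _)
  have hdeg : (p.coeff m * X ^ (L * m)).natDegree = (p.coeff m).natDegree + L * m := by
    rw [hm.natDegree_mul (monic_X_pow _), natDegree_X_pow]
  refine hmon.add_of_left ((degree_sum_le _ _).trans_lt ?_)
  rw [Finset.sup_lt_iff (by rw [bot_lt_iff_ne_bot, Ne, degree_eq_bot]; exact hmon.ne_zero)]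
  intro i hi
  rw [degree_eq_natDegree hmon.ne_zero, hdeg]
  refine degree_le_natDegree.trans_lt (Nat.cast_lt.2 ?_)
  calc (p.coeff i * X ^ (L * i)).natDegree
      ≤ (p.coeff i).natDegree + L * i := natDegree_mul_le.trans (by rw [natDegree_X_pow])
    _ < L * (i + 1) := by rw [mul_add_one, add_comm]; gcongr; exact hL i (Finset.mem_range.1 hi)
    _ ≤ L * m := Nat.mul_le_mul_left _ (Finset.mem_range.1 hi)
    _ ≤ (p.coeff m).natDegree + L * m := Nat.le_add_left _ _

lemma exists_monic_det_X_pow_smul_add {ι : Type*} [Fintype ι] [DecidableEq ι]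
    {D : Matrix ι ι B[X]} (hD : D.det.Monic) (P : Matrix ι ι B[X]) :
    ∃ L : ℕ, ((X ^ L : B[X]) • D + P).det.Monic := by
  obtain ⟨L, hL⟩ := exists_monic_eval_X_pow (natDegree_det_X_add_C_le D P)
    (by rwa [coeff_det_X_add_C_card])
  refine ⟨L, ?_⟩
  convert hL
  rw [← coe_evalRingHom, RingHom.map_det]
  congr 1
  ext1 i j
  simp [mul_comm (X ^ L)]

/-- Modulo a monic polynomial, `B[X]` is integral over the local ring `B`, so that every maximal
ideal containing `I` lies over the maximal ideal of `B`. -/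
lemma eq_top_of_monic_mem_of_isUnit_map_residue [IsLocalRing B] {I : Ideal B[X]} {f g : B[X]}
    (hf : f.Monic) (hfI : f ∈ I) (hg : IsUnit (g.map (IsLocalRing.residue B))) (hgI : g ∈ I) :
    I = ⊤ := by
  by_contra hI
  obtain ⟨Q, hQ, hIQ⟩ := Ideal.exists_le_maximal I hI
  have := hf.finite_quotient
  have hfQ : Ideal.span {f} ≤ Q := (Ideal.span_singleton_le_iff_mem Q).2 (hIQ hfI)
  have : Module.Finite B (B[X] ⧸ Q) :=
    Module.Finite.of_surjective (Ideal.Quotient.factorₐ B hfQ).toLinearMap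
      (Ideal.Quotient.factor_surjective hfQ)
  have : (⊥ : Ideal (B[X] ⧸ Q)).IsMaximal := (Ideal.bot_quotient_isMaximal_iff Q).2 hQ
  have hmax : (Ideal.comap (algebraMap B (B[X] ⧸ Q)) ⊥).IsMaximal :=
    Ideal.isMaximal_comap_of_isIntegral_of_isMaximal _
  have hker : RingHom.ker (mapRingHom (IsLocalRing.residue B)) ≤ Q := by
    rw [ker_mapRingHom, IsLocalRing.ker_residue, ← IsLocalRing.eq_maximalIdeal hmax,
      Ideal.map_le_iff_le_comap]
    intro b hb
    exact (Ideal.Quotient.eq_zero_iff_mem (I := Q) (a := C b)).1 hb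
  obtain ⟨u, hu⟩ := hg.exists_left_inv
  obtain ⟨c, rfl⟩ := Polynomial.map_surjective _ IsLocalRing.residue_surjective u
  have hc : c * g - 1 ∈ Q := hker (by simp [RingHom.mem_ker, hu])
  exact hQ.ne_top ((Ideal.eq_top_iff_one Q).2
    ((Submodule.sub_mem_iff_right Q (Q.mul_mem_left c (hIQ hgI))).1 hc))

/-- Horrocks' theorem over a local ring. -/
lemma IsUnimodular.glEquiv_single_of_monic_det [IsLocalRing B] {m : ℕ} {v : Fin (m + 2) → B[X]}
    (hv : IsUnimodular v) {D : Matrix (Fin (m + 2)) (Fin (m + 2)) B[X]} (hDv : D.col 0 = v)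
    (hD : D.det.Monic) : GLEquiv (Pi.single 0 1) v := by
  let ρ := mapRingHom (IsLocalRing.residue B)
  obtain ⟨E, U, hEU, hU⟩ := exists_eq_mul_upperTriangular
    ((D.map ρ).submatrix id (Fin.succAbove 1))
  choose G hG using fun i j ↦
    Polynomial.map_surjective _ IsLocalRing.residue_surjective (E i j)
  obtain ⟨L, hL⟩ := exists_monic_det_X_pow_smul_add hD
    (of fun i j ↦ if j = 0 ∨ j = 1 then 0 else G i j)
  set A := (X ^ L : B[X]) • D + of fun i j ↦ if j = 0 ∨ j = 1 then 0 else G i j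
  let W := A.updateCol 0 v
  let ℓ : (Fin (m + 2) → B[X]) →ₗ[B[X]] B[X] := (LinearMap.proj 1).comp W.cramer
  have hℓ : ∀ y, ℓ y = (W.updateCol 1 y).det := fun y ↦ cramer_apply W y 1
  have hmonic : A.det ∈ LinearMap.range ℓ := by
    have hA0 : A = A.updateCol 0 ((X ^ L : B[X]) • v) := by
      refine (updateCol_eq_self A 0).symm.trans (congrArg _ (funext fun i ↦ ?_))
      simp [A, ← hDv]
    have hW1 : W = W.updateCol 1 (A.col 1) := by
      refine (updateCol_eq_self W 1).symm.trans (congrArg _ (funext fun i ↦ ?_))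
      simp [W]
    have hdet : A.det = X ^ L * ℓ (A.col 1) := by
      rw [hℓ, ← hW1, hA0, det_updateCol_smul]
    rw [hdet]
    exact Ideal.mul_mem_left _ _ ⟨_, rfl⟩
  have hunit : IsUnit (ρ (ℓ fun i ↦ G i 1)) := by
    rw [hℓ, RingHom.map_det]
    have hDv' : (D.map ρ).col 0 = fun i ↦ ρ (v i) := by rw [← hDv]; rfl
    refine isUnit_det_of_eq_mul_upperTriangular (hDv' ▸ hv.map ρ) hEU hU (x := ρ (X ^ L)) ?_ ?_ ?_
    · ext1 i
      simp [W, ρ, ← hDv]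
    · ext1 i
      simp [W, ρ, hG]
    · intro j
      ext1 i
      have hj : j.succ.succ ≠ 1 := by simp [Fin.ext_iff]
      simp [W, A, ρ, hG, hj, Matrix.updateCol_ne, add_comm]
  have htop : LinearMap.range ℓ = ⊤ :=
    eq_top_of_monic_mem_of_isUnit_map_residue hL hmonic hunit ⟨_, rfl⟩
  obtain ⟨y, hy⟩ := LinearMap.range_eq_top.1 htop 1
  refine GLEquiv.of_col_eq (D := W.updateCol 1 y) (by rw [← hℓ, hy]; exact isUnit_one) (i₀ := 0) ?_
  ext i
  simp [W]

end Horrocks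

section Patching

open Polynomial

lemma exists_map_eq_map_comp_C_mul_X {ι R S : Type*} [Finite ι] [DecidableEq ι] [CommRing R]
    [CommRing S] [Algebra R S] (M : Submonoid R) [IsLocalization M S] {G : Matrix ι ι S[X]}
    (hG : G.map (evalRingHom 0) = 1) :
    ∃ s ∈ M, ∃ H : Matrix ι ι R[X], H.map (mapRingHom (algebraMap R S)) =
      G.map (compRingHom (C (algebraMap R S s) * X)) := by
  let : Algebra R[X] S[X] := Polynomial.algebra R S
  have := Polynomial.isLocalization M S
  obtain ⟨⟨_, s, hs, rfl⟩, hsG⟩ := IsLocalization.exist_integer_multiples_of_finite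
    (M.map (C : R →+* R[X])) fun ij : ι × ι ↦ G ij.1 ij.2
  choose q hq using hsG
  refine ⟨s, hs, ?_⟩
  suffices h : ∀ i j, (G i j).comp (C (algebraMap R S s) * X) ∈ lifts (algebraMap R S) by
    simp only [mem_lifts] at h
    choose H hH using h
    exact ⟨H, Matrix.ext hH⟩
  intro i j
  rw [lifts_iff_coeff_lifts]
  intro n
  rw [comp_C_mul_X_coeff]
  rcases n with _ | n
  · have hij : (G i j).coeff 0 = (1 : Matrix ι ι S) i j := by
      rw [← hG, coeff_zero_eq_eval_zero]
      rfl
    refine ⟨(1 : Matrix ι ι R) i j, ?_⟩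
    rw [hij, pow_zero, mul_one, one_apply, one_apply]
    split <;> simp
  · have hn : algebraMap R S ((q (i, j)).coeff n.succ) =
        algebraMap R S s * (G i j).coeff n.succ := by
      rw [← coeff_map]
      have h := congrArg (fun p ↦ p.coeff n.succ) (hq (i, j))
      simpa [Algebra.smul_def, algebraMap_def] using h
    exact ⟨(q (i, j)).coeff n.succ * s ^ n, by rw [map_mul, hn, map_pow]; ring⟩

variable {ι : Type*} [Fintype ι] [DecidableEq ι]

lemma exists_GL_mulVec_translate {R : Type*} [CommRing R] {c : ι → R} {v : ι → R[X]}
    (h : GLEquiv (fun i ↦ C (c i)) v) :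
    ∃ G : GL ι R[X][X], GeneralLinearGroup.map (evalRingHom 0) G = 1 ∧
      G.1 *ᵥ (fun i ↦ aeval (C X + X : R[X][X]) (v i)) = fun i ↦ C (v i) := by
  obtain ⟨D, rfl⟩ := h
  let τ : R[X] →ₐ[R] R[X][X] := aeval (C X + X)
  have hτ : (evalRingHom 0).comp (τ : R[X] →+* R[X][X]) = RingHom.id R[X] := by
    ext <;> simp [τ]
  have hC : (evalRingHom (0 : R[X])).comp C = RingHom.id R[X] := by ext <;> simp
  refine ⟨GeneralLinearGroup.map C D * (GeneralLinearGroup.map (τ : R[X] →+* R[X][X]) D)⁻¹, ?_, ?_⟩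
  · rw [GeneralLinearGroup.map_mul, GeneralLinearGroup.map_inv, ← GeneralLinearGroup.map_comp_apply,
      ← GeneralLinearGroup.map_comp_apply, ← GeneralLinearGroup.map_comp,
      ← GeneralLinearGroup.map_comp, hτ, hC, mul_inv_cancel]
  · have hDτ : (fun i ↦ τ ((D.1 *ᵥ fun i ↦ C (c i)) i)) =
        (GeneralLinearGroup.map (τ : R[X] →+* R[X][X]) D).1 *ᵥ fun i ↦ C (C (c i)) := by
      ext1 i
      rw [map_mulVec]
      simp [τ]
    have hDC : (fun i ↦ C ((D.1 *ᵥ fun i ↦ C (c i)) i)) =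
        (GeneralLinearGroup.map C D).1 *ᵥ fun i ↦ C (C (c i)) := by
      ext1 i
      rw [map_mulVec]
      rfl
    rw [hDC, hDτ, mulVec_mulVec, ← Units.val_mul, inv_mul_cancel_right]

lemma det_eq_one_of_map_evalRingHom_zero {R : Type*} [CommRing R] [IsDomain R] {G : GL ι R[X]}
    (hG : GeneralLinearGroup.map (evalRingHom 0) G = 1) : G.1.det = 1 := by
  obtain ⟨r, -, hr⟩ := Polynomial.isUnit_iff.1 (isUnit_det_coe G)
  have h := congrArg (fun H : GL ι R ↦ H.1.det) hG
  have hdet : (evalRingHom 0) G.1.det = 1 := by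
    rw [RingHom.map_det]
    simpa using h
  rw [← hr, coe_evalRingHom, eval_C] at hdet
  rw [← hr, hdet, C_1]

variable {B : Type*} [CommRing B] {v : ι → B[X]}

lemma aeval_C_X (p : B[X]) : aeval (C X : B[X][X]) p = C p := by
  simpa using aeval_algebraMap_apply B[X][X] (X : B[X]) p

lemma GLEquiv.aeval_add_smul {A : Type*} [CommRing A] [Algebra B A] {b : B}
    (h : GLEquiv (fun i ↦ aeval (C X + b • X : B[X][X]) (v i)) fun i ↦ C (v i)) (x y : A) :
    GLEquiv (fun i ↦ aeval (x + b • y) (v i)) fun i ↦ aeval x (v i) := by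
  let f : B[X][X] →+* A := eval₂RingHom (aeval x : B[X] →ₐ[B] A).toRingHom y
  convert h.map f using 2 with i i
  · rw [aeval_def, aeval_def, hom_eval₂]
    congr 1
    · ext a
      exact (by simp [f] : f (C (C a)) = _).symm
    · simp [f, Algebra.smul_def]
  · simp [f]

/-- Quillen's ideal of a polynomial vector `v`: the scalars `b` for which `v(X + bY)` and `v(X)`
are equivalent over `B[X][Y]`. -/
def quillenIdeal (v : ι → B[X]) : Ideal B where
  carrier := {b | GLEquiv (fun i ↦ aeval (C X + b • X : B[X][X]) (v i)) fun i ↦ C (v i)}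
  zero_mem' := by
    simpa only [Set.mem_ofPred_eq, zero_smul, add_zero, aeval_C_X] using
      GLEquiv.refl fun i ↦ C (v i)
  add_mem' {a b} ha hb := by
    have h := hb.aeval_add_smul (C X + a • X : B[X][X]) X
    rw [add_assoc, ← add_smul] at h
    exact h.trans ha
  smul_mem' c b hb := by
    have h := hb.aeval_add_smul (C X : B[X][X]) (c • X)
    simpa only [Set.mem_ofPred_eq, smul_smul, smul_eq_mul, mul_comm b c, aeval_C_X] using h

lemma exists_mem_quillenIdeal [IsDomain B] {M : Submonoid B} (hM : M ≤ nonZeroDivisors B)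
    (K : Type*) [CommRing K] [Algebra B K] [IsLocalization M K] {c : ι → K}
    (h : GLEquiv (fun i ↦ C (c i)) fun i ↦ (v i).map (algebraMap B K)) :
    ∃ s ∈ M, s ∈ quillenIdeal v := by
  have := IsLocalization.isDomain_of_le_nonZeroDivisors K hM
  let : Algebra B[X] K[X] := Polynomial.algebra B K
  have := Polynomial.isLocalization M K
  obtain ⟨G, hG, hGv⟩ := exists_GL_mulVec_translate h
  obtain ⟨_, ⟨s, hs, rfl⟩, H, hH⟩ :=
    exists_map_eq_map_comp_C_mul_X (M.map (C : B →+* B[X])) (congrArg Units.val hG)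
  let φ : B[X][X] →+* K[X][X] := mapRingHom (mapRingHom (algebraMap B K))
  let σ : K[X][X] →+* K[X][X] := compRingHom (C (C (algebraMap B K s)) * X)
  have hφ : Function.Injective φ :=
    map_injective _ (map_injective _ (IsLocalization.injective K hM))
  have hφH : H.map φ = G.1.map σ := by
    have hs' : mapRingHom (algebraMap B K) (C s) = C (algebraMap B K s) := map_C _
    rw [algebraMap_def, hs'] at hH
    exact hH
  have hσ (p : B[X]) : σ (aeval (C X + X : K[X][X]) (p.map (algebraMap B K))) =
      φ (aeval (C X + s • X : B[X][X]) p) := by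
    simp only [aeval_def, eval₂_map, hom_eval₂]
    congr 1
    · ext a
      simp [φ, σ]
    · simp [φ, σ, Algebra.smul_def]
  have hdet : H.det = 1 := hφ <| calc
    φ H.det = (H.map φ).det := RingHom.map_det φ H
    _ = σ G.1.det := by rw [hφH]; exact (RingHom.map_det σ G.1).symm
    _ = φ 1 := by rw [det_eq_one_of_map_evalRingHom_zero hG, map_one, map_one]
  refine ⟨s, hs, ?_⟩
  suffices h : H *ᵥ (fun i ↦ aeval (C X + s • X : B[X][X]) (v i)) = fun i ↦ C (v i) by
    change GLEquiv _ _
    rw [← h]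
    exact GLEquiv.of_isUnit_det (by rw [hdet]; exact isUnit_one) _
  ext1 i
  apply hφ
  symm
  calc φ (C (v i)) = σ (C ((v i).map (algebraMap B K))) := by simp [φ, σ]
    _ = _ := by
      rw [map_mulVec, ← congrFun hGv i, map_mulVec, hφH]
      simp only [hσ]

theorem glEquiv_eval_zero_of_forall_maximal [IsDomain B]
    (h : ∀ (P : Ideal B) [P.IsMaximal], ∃ c : ι → Localization.AtPrime P,
      GLEquiv (fun i ↦ C (c i)) fun i ↦ (v i).map (algebraMap B (Localization.AtPrime P))) :
    GLEquiv (fun i ↦ C ((v i).eval 0)) v := by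
  have hJ : quillenIdeal v = ⊤ := by
    by_contra hne
    obtain ⟨P, hP, hle⟩ := Ideal.exists_le_maximal _ hne
    obtain ⟨c, hc⟩ := h P
    obtain ⟨s, hs, hsv⟩ := exists_mem_quillenIdeal P.primeCompl_le_nonZeroDivisors _ hc
    exact hs (hle hsv)
  have h1 : (1 : B) ∈ quillenIdeal v := hJ ▸ Submodule.mem_top
  convert (GLEquiv.aeval_add_smul h1 (0 : B[X]) X).symm using 2 with i i
  · rw [aeval_def, eval₂_at_zero, coeff_zero_eq_eval_zero, algebraMap_eq]
  · simp

/-- The hypotheses on `D` say that `v` is completable after inverting monic polynomials. -/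
theorem IsUnimodular.glEquiv_eval_zero_of_monic_det_mul [IsDomain B] {m : ℕ}
    {v : Fin (m + 2) → B[X]} (hv : IsUnimodular v) {D : Matrix (Fin (m + 2)) (Fin (m + 2)) B[X]}
    (hDv : D.col 0 = v) {y : B[X]} (hD : (D.det * y).Monic) :
    GLEquiv (fun i ↦ C ((v i).eval 0)) v := by
  refine glEquiv_eval_zero_of_forall_maximal fun P _ ↦ ⟨Pi.single 0 1, ?_⟩
  let f := mapRingHom (algebraMap B (Localization.AtPrime P))
  let D' := D.updateCol 1 (y • D.col 1)
  have hdet : D'.det = D.det * y := by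
    rw [det_updateCol_smul, mul_comm]
    exact congrArg (· * y) (congrArg det (updateCol_eq_self D 1))
  have hD' : (D'.map f).det.Monic := by
    have h : (D'.map f).det = f D'.det := (RingHom.map_det f D').symm
    rw [h, hdet]
    exact hD.map _
  have hcol : (D'.map f).col 0 = fun i ↦ f (v i) := by
    ext1 i
    simp [D', ← hDv]
  convert (hv.map f).glEquiv_single_of_monic_det hcol hD' using 1
  · ext1 i
    simp [Pi.single_apply, apply_ite C]
  · rfl

end Patching

section MonicLocalization

open Polynomial

variable {A : Type*} [CommRing A]

lemma exists_monic_mem_of_map_mk_ne_zero {m : Ideal A} [m.IsMaximal] {Q : Ideal A[X]}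
    (hmQ : m.map C ≤ Q) {g : A[X]} (hgQ : g ∈ Q) (hg : g.map (Ideal.Quotient.mk m) ≠ 0) :
    ∃ f ∈ Q, f.Monic := by
  let := Ideal.Quotient.field m
  obtain ⟨u, hu⟩ := Ideal.Quotient.mk_surjective (g.map (Ideal.Quotient.mk m)).leadingCoeff⁻¹
  have hmap : (g * C u).map (Ideal.Quotient.mk m) =
      g.map (Ideal.Quotient.mk m) * C (g.map (Ideal.Quotient.mk m)).leadingCoeff⁻¹ := by
    rw [Polynomial.map_mul, map_C, hu]
  obtain ⟨f, hf, -, hfm⟩ := lifts_and_degree_eq_and_monic ⟨_, hmap⟩ (monic_mul_leadingCoeff_inv hg)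
  have hker : g * C u - f ∈ m.map C := by
    rw [Ideal.mem_map_C_iff]
    intro n
    rw [← Ideal.Quotient.eq_zero_iff_mem, ← coeff_map, Polynomial.map_sub, hmap, hf, sub_self,
      coeff_zero]
  exact ⟨f, (Submodule.sub_mem_iff_right Q (Q.mul_mem_right _ hgQ)).1 (hmQ hker), hfm⟩

variable (A) in
/-- The multiplicative set of monic polynomials. -/
def monicSubmonoid : Submonoid A[X] where
  carrier := {p | p.Monic}
  one_mem' := monic_one
  mul_mem' := Monic.mul

lemma monicSubmonoid_le_nonZeroDivisors : monicSubmonoid A ≤ nonZeroDivisors A[X] :=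
  fun _ hp ↦ Monic.mem_nonZeroDivisors hp

variable [IsDomain A]

instance : IsDomain (Localization (monicSubmonoid A)) :=
  IsLocalization.isDomain_localization monicSubmonoid_le_nonZeroDivisors

variable [IsPrincipalIdealRing A]

lemma isPrincipal_of_comap_C_eq_bot {Q : Ideal A[X]} [hQ : Q.IsPrime] (h : Q.comap C = ⊥) :
    Q.IsPrincipal := by
  by_cases hQ0 : Q = ⊥
  · rw [hQ0]
    infer_instance
  obtain ⟨q, hqQ, hq⟩ := hQ.exists_mem_prime_of_ne_bot hQ0
  let K := FractionRing A
  let : Algebra A[X] K[X] := Polynomial.algebra A K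
  let M := (nonZeroDivisors A).map (C : A →+* A[X])
  have : IsLocalization M K[X] := Polynomial.isLocalization _ K
  have hdisj : Disjoint (M : Set A[X]) Q := by
    rw [Set.disjoint_left]
    rintro _ ⟨a, ha, rfl⟩ haQ
    have : a ∈ Q.comap C := haQ
    rw [h, Ideal.mem_bot] at this
    exact nonZeroDivisors.ne_zero ha this
  have hqQ' : Ideal.span {q} ≤ Q := (Ideal.span_singleton_le_iff_mem Q).2 hqQ
  have hqprime : (Ideal.span {q}).IsPrime := (Ideal.span_singleton_prime hq.ne_zero).2 hq
  have hdisjq : Disjoint (M : Set A[X]) (Ideal.span {q} : Ideal A[X]) := hdisj.mono_right hqQ'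
  have hprime := IsLocalization.isPrime_of_isPrime_disjoint M K[X] _ hqprime hdisjq
  have hne : (Ideal.span {q}).map (algebraMap A[X] K[X]) ≠ ⊥ := by
    rw [Ideal.map_span, Set.image_singleton, Ne, Ideal.span_singleton_eq_bot]
    exact (map_ne_zero_iff _ (map_injective _ (IsFractionRing.injective A K))).2 hq.ne_zero
  have hmap := (hprime.isMaximal hne).eq_of_le
    (IsLocalization.isPrime_of_isPrime_disjoint M K[X] Q hQ hdisj).ne_top (Ideal.map_mono hqQ')
  have hunder := congrArg (Ideal.under A[X]) hmap
  rw [IsLocalization.under_map_of_isPrime_disjoint M K[X] hqprime hdisjq,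
    IsLocalization.under_map_of_isPrime_disjoint M K[X] hQ hdisj] at hunder
  exact ⟨q, hunder.symm⟩

lemma isPrincipal_of_forall_not_monic {Q : Ideal A[X]} [hQ : Q.IsPrime]
    (h : ∀ f ∈ Q, ¬ f.Monic) : Q.IsPrincipal := by
  by_cases h0 : Q.comap C = ⊥
  · exact isPrincipal_of_comap_C_eq_bot h0
  have hmax : (Q.comap C).IsMaximal := (hQ.comap C).isMaximal h0
  have hQ' : Q = (Q.comap C).map C := by
    refine le_antisymm (fun g hg ↦ ?_) Ideal.map_comap_le
    by_contra hgQ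
    obtain ⟨f, hf, hfm⟩ := exists_monic_mem_of_map_mk_ne_zero Ideal.map_comap_le hg
      (m := Q.comap C) fun h ↦ hgQ <| Ideal.mem_map_C_iff.2 fun n ↦ by
        rw [← Ideal.Quotient.eq_zero_iff_mem, ← coeff_map, h, coeff_zero]
    exact h f hf hfm
  rw [hQ']
  infer_instance

instance : IsPrincipalIdealRing (Localization (monicSubmonoid A)) := by
  refine IsPrincipalIdealRing.of_prime fun P hP ↦ ?_
  obtain ⟨hQ, hdisj⟩ := (IsLocalization.isPrime_iff_isPrime_disjoint (monicSubmonoid A) _ P).1 hP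
  have := isPrincipal_of_forall_not_monic fun f hf hfm ↦ Set.disjoint_left.1 hdisj hfm hf
  rw [← IsLocalization.map_under (monicSubmonoid A) _ P]
  infer_instance

end MonicLocalization

section QuillenSuslin

open Polynomial

lemma IsHermite.exists_det_mul_mem {R S ι : Type*} [CommRing R] [CommRing S] [Algebra R S]
    [Fintype ι] [DecidableEq ι] {M : Submonoid R} [IsLocalization M S]
    (hM : M ≤ nonZeroDivisors R) (hS : IsHermite S) {v : ι → R} (hv : IsUnimodular v) (i₀ : ι) :
    ∃ D : Matrix ι ι R, D.col i₀ = v ∧ ∃ y, D.det * y ∈ M := by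
  have hinj : Function.Injective (algebraMap R S) := IsLocalization.injective S hM
  obtain ⟨G, hG⟩ := (hS.glEquiv_single i₀ (hv.map (algebraMap R S))).exists_map_apply_eq
  obtain ⟨⟨s, hs⟩, h⟩ := IsLocalization.exist_integer_multiples_of_finite M
    (Sum.elim (fun ij : ι × ι ↦ G ij.1 ij.2) fun ij : ι × ι ↦ (G⁻¹ : GL ι S) ij.1 ij.2)
  choose q hq using h
  let H : Matrix ι ι R := of fun i j ↦ q (.inl (i, j))
  let K : Matrix ι ι R := of fun i j ↦ q (.inr (i, j))
  have hH : H.map (algebraMap R S) = algebraMap R S s • G.1 := by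
    ext i j
    exact (hq _).trans (Algebra.smul_def _ _)
  have hK : K.map (algebraMap R S) = algebraMap R S s • (G⁻¹ : GL ι S).1 := by
    ext i j
    exact (hq _).trans (Algebra.smul_def _ _)
  have hHK : H * K = (s * s) • 1 := by
    apply Matrix.map_injective hinj
    beta_reduce
    rw [Matrix.map_mul, hH, hK, smul_mul_smul_comm, Units.mul_inv]
    ext i j
    simp [one_apply, apply_ite (algebraMap R S)]
  have hcol : H.updateCol i₀ (s • v) = H := by
    refine (congrArg (H.updateCol i₀) (funext fun i ↦ hinj ?_)).trans (updateCol_eq_self H i₀)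
    rw [Pi.smul_apply, smul_eq_mul, map_mul, ← hG, ← Algebra.smul_def]
    exact (hq (.inl (i, i₀))).symm
  have hdet : H.det = s * (H.updateCol i₀ v).det := by
    rw [← det_updateCol_smul, hcol]
  refine ⟨H.updateCol i₀ v, by ext; simp, s * K.det, ?_⟩
  rw [mul_left_comm, ← mul_assoc, ← hdet, ← det_mul, hHK, det_smul, det_one, mul_one]
  exact pow_mem (mul_mem hs hs) _

lemma IsHermite.polynomial {B : Type*} [CommRing B] [IsDomain B] (hB : IsHermite B)
    (h : ∀ (m : ℕ) (v : Fin (m + 2) → B[X]), IsUnimodular v →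
      ∃ D : Matrix (Fin (m + 2)) (Fin (m + 2)) B[X], D.col 0 = v ∧ ∃ y, (D.det * y).Monic) :
    IsHermite B[X] := by
  rintro (_ | m) v hv
  · have h0 : IsUnit (v 0) := hv.isUnit_of_eq_smul (u := 1) (by ext i; simp [Fin.fin_one_eq_zero i])
    exact GLEquiv.of_col_eq (D := of fun i _ ↦ v i) (by simpa using h0) rfl
  obtain ⟨D, hD, y, hy⟩ := h m v hv
  refine GLEquiv.trans ?_ (hv.glEquiv_eval_zero_of_monic_det_mul hD hy)
  convert (hB _ _ (hv.map (evalRingHom 0))).map C using 1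
  · ext1 i
    simp [Pi.single_apply, apply_ite C]
  · rfl

lemma exists_algEquiv_mvPolynomial_swap (A σ : Type*) [CommRing A] :
    ∃ e : (MvPolynomial σ A)[X] ≃ₐ[A] MvPolynomial σ A[X],
      ∀ p : A[X], e.symm (MvPolynomial.C p) = p.map MvPolynomial.C := by
  let e := (MvPolynomial.optionEquivLeft A σ).symm.trans (MvPolynomial.optionEquivRight A σ)
  refine ⟨e, fun p ↦ e.symm_apply_eq.2 ?_⟩
  have h : (e : (MvPolynomial σ A)[X] →ₐ[A] _).comp (mapAlgHom (Algebra.ofId A _)) =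
      IsScalarTower.toAlgHom A A[X] (MvPolynomial σ A[X]) := by
    ext
    simp [e]
  exact (DFunLike.congr_fun h p).symm

theorem IsHermite.mvPolynomial_fin (A : Type*) [CommRing A] [IsDomain A] [IsPrincipalIdealRing A]
    (r : ℕ) : IsHermite (MvPolynomial (Fin r) A) := by
  induction r generalizing A with
  | zero =>
    exact (IsHermite.of_isPrincipalIdealRing (R := A)).of_ringEquiv
      (MvPolynomial.isEmptyRingEquiv A (Fin 0)).symm
  | succ r ih =>
    suffices h : IsHermite (MvPolynomial (Fin r) A)[X] from
      h.of_ringEquiv (MvPolynomial.finSuccEquiv A r).symm.toRingEquiv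
    refine (ih A).polynomial fun m v hv ↦ ?_
    obtain ⟨e, he⟩ := exists_algEquiv_mvPolynomial_swap A (Fin r)
    have hM : (monicSubmonoid A).map (MvPolynomial.C (σ := Fin r)) ≤ nonZeroDivisors _ :=
      map_le_nonZeroDivisors_of_injective _ (MvPolynomial.C_injective _ _)
        monicSubmonoid_le_nonZeroDivisors
    let := MvPolynomial.algebraMvPolynomial (R := A[X]) (S := Localization (monicSubmonoid A))
      (σ := Fin r)
    obtain ⟨D, hD, y, s, hs, hy⟩ := (ih (Localization (monicSubmonoid A))).exists_det_mul_mem hM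
      (hv.map e.toRingEquiv.toRingHom) 0
    let f : MvPolynomial (Fin r) A[X] →+* (MvPolynomial (Fin r) A)[X] :=
      e.symm.toRingEquiv.toRingHom
    refine ⟨D.map f, ?_, f y, ?_⟩
    · ext1 i
      simpa [f] using congrArg f (congrFun hD i)
    · have hdet : (D.map f).det = f D.det := (RingHom.map_det f D).symm
      rw [hdet, ← map_mul, ← hy]
      exact (he s).symm ▸ hs.map _

/-- The Quillen–Suslin theorem. -/
theorem IsHermite.mvPolynomial (A : Type*) [CommRing A] [IsDomain A] [IsPrincipalIdealRing A]
    (σ : Type*) [Finite σ] : IsHermite (MvPolynomial σ A) := by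
  have := Fintype.ofFinite σ
  exact (IsHermite.mvPolynomial_fin A (Fintype.card σ)).of_ringEquiv
    (MvPolynomial.renameEquiv A (Fintype.equivFin σ).symm).toRingEquiv

end QuillenSuslin

section Koszul

open Polynomial

variable {R A ι : Type*} [CommRing R] [CommRing A] [Fintype ι]

/-- Exactness of the Koszul complex of `t` in degree one: every syzygy of `t` is a combination of
the trivial syzygies `t k • e i - t i • e k`. -/
def IsKoszulExactOne (t : ι → R) : Prop :=
  ∀ f : ι → R, f ⬝ᵥ t = 0 → ∃ N : Matrix ι ι R, f = (N - Nᵀ) *ᵥ t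

/-- Exactness of the Koszul complex of `t` in degree two. The relations in degree two are tested
on the alternating families `b`, indexed by pairs and with values in `V`, which satisfy the Jacobi
identity. -/
def IsKoszulExactTwo (V : Type*) [AddCommGroup V] [Module R V] (t : ι → R) : Prop :=
  ∀ b : ι → ι → V, (∀ i, b i i = 0) → (∀ i j, b i j = -b j i) →
    (∀ i j k, t i • b j k + t j • b k i + t k • b i j = 0) →
    ∀ N : Matrix ι ι R, (N - Nᵀ) *ᵥ t = 0 → ∑ i, ∑ j, N i j • b i j = 0

lemma sub_transpose_mulVec_dotProduct (N : Matrix ι ι R) (u : ι → R) :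
    ((N - Nᵀ) *ᵥ u) ⬝ᵥ u = 0 := by
  rw [sub_mulVec, sub_dotProduct, mulVec_transpose, ← dotProduct_mulVec, dotProduct_comm, sub_self]

-- The hypotheses say that `x` is a nonzerodivisor and `R = A ⊕ x R`, as for `x = X 0` in
-- `R = MvPolynomial (Fin (n + 1)) A`.
variable {n : ℕ} {φ : A →+* R} {x : R} {t : Fin n → A} {t' : Fin (n + 1) → R}

lemma IsKoszulExactOne.adjoin (ht : IsKoszulExactOne t) (hφ : ∀ r, ∃ a q, r = φ a + x * q)
    (hx : ∀ a q, φ a + x * q = 0 → a = 0 ∧ q = 0) (h0 : t' 0 = x)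
    (hs : ∀ j, t' j.succ = φ (t j)) : IsKoszulExactOne t' := by
  intro f hf
  choose c g hcg using fun j : Fin n ↦ hφ (f j.succ)
  have hsplit : φ (c ⬝ᵥ t) + x * (f 0 + ∑ j, g j * φ (t j)) = 0 := by
    rw [← hf, dotProduct, dotProduct, Fin.sum_univ_succ, h0, map_sum, mul_add, Finset.mul_sum]
    simp only [hs, hcg, add_mul, Finset.sum_add_distrib, map_mul]
    simp only [mul_assoc]
    ring
  obtain ⟨hc, hg⟩ := hx _ _ hsplit
  obtain ⟨N, rfl⟩ := ht c hc
  refine ⟨of (Fin.cons 0 fun j ↦ Fin.cons (g j) fun k ↦ φ (N j k)), ?_⟩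
  ext i
  induction i using Fin.cases with
  | zero =>
    rw [eq_neg_of_add_eq_zero_left hg]
    simp [mulVec, dotProduct, Fin.sum_univ_succ, hs]
  | succ j =>
    rw [hcg]
    simp [mulVec, dotProduct, Fin.sum_univ_succ, hs, h0, mul_comm, add_comm]

lemma exists_sub_transpose_mulVec_eq_zero (hφ : ∀ r, ∃ a q, r = φ a + x * q)
    (hx : ∀ a q, φ a + x * q = 0 → a = 0 ∧ q = 0) (h0 : t' 0 = x)
    (hs : ∀ j, t' j.succ = φ (t j)) {N : Matrix (Fin (n + 1)) (Fin (n + 1)) R}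
    (hN : (N - Nᵀ) *ᵥ t' = 0) :
    ∃ (c : Matrix (Fin n) (Fin n) A) (g : Matrix (Fin n) (Fin n) R),
      (∀ j k, N j.succ k.succ = φ (c j k) + x * g j k) ∧ (c - cᵀ) *ᵥ t = 0 ∧
      ∀ j, N 0 j.succ - N j.succ 0 = ∑ k, (g j k - g k j) * t' k.succ := by
  choose c g hcg using fun j k : Fin n ↦ hφ (N j.succ k.succ)
  have hrow (j : Fin n) : φ (((of c - (of c)ᵀ) *ᵥ t) j) +
      x * (N j.succ 0 - N 0 j.succ + ∑ k, (g j k - g k j) * φ (t k)) = 0 := by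
    have := congrFun hN j.succ
    simp only [mulVec, dotProduct, Fin.sum_univ_succ, h0, hs, Matrix.sub_apply, transpose_apply,
      hcg, Pi.zero_apply] at this
    rw [← this]
    simp only [mulVec, dotProduct, map_sum, mul_add, Finset.mul_sum,
      Matrix.sub_apply, transpose_apply, of_apply, map_mul, map_sub]
    rw [add_left_comm, ← Finset.sum_add_distrib, mul_comm x]
    refine congrArg _ (Finset.sum_congr rfl fun k _ ↦ ?_)
    ring
  refine ⟨of c, of g, hcg, funext fun j ↦ (hx _ _ (hrow j)).1, fun j ↦ ?_⟩
  simp only [hs, of_apply]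
  linear_combination -(hx _ _ (hrow j)).2

lemma IsKoszulExactTwo.adjoin {V : Type*} [AddCommGroup V] [Module A V] [Module R V]
    (hV : ∀ (a : A) (z : V), φ a • z = a • z) (ht : IsKoszulExactTwo V t)
    (hφ : ∀ r, ∃ a q, r = φ a + x * q) (hx : ∀ a q, φ a + x * q = 0 → a = 0 ∧ q = 0)
    (h0 : t' 0 = x) (hs : ∀ j, t' j.succ = φ (t j)) : IsKoszulExactTwo V t' := by
  intro b hb hb' hJ N hN
  obtain ⟨c, g, hcg, hcN, hgN⟩ := exists_sub_transpose_mulVec_eq_zero hφ hx h0 hs hN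
  have hc : ∑ j, ∑ k, c j k • b j.succ k.succ = 0 :=
    ht (fun j k ↦ b j.succ k.succ) (fun _ ↦ hb _) (fun _ _ ↦ hb' _ _)
      (fun i j k ↦ by simpa only [hs, hV] using hJ i.succ j.succ k.succ) c hcN
  have hfirst (j : Fin n) : N 0 j.succ • b 0 j.succ + N j.succ 0 • b j.succ 0 =
      ∑ k, (g j k • t' k.succ • b 0 j.succ - g k j • t' k.succ • b 0 j.succ) := by
    rw [hb' j.succ 0, smul_neg, ← sub_eq_add_neg, ← sub_smul, hgN]
    simp only [Finset.sum_smul, sub_mul, sub_smul, mul_smul]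
  have hrest (j k : Fin n) : N j.succ k.succ • b j.succ k.succ = c j k • b j.succ k.succ +
      (g j k • t' j.succ • b 0 k.succ - g j k • t' k.succ • b 0 j.succ) := by
    have hJ' : x • b j.succ k.succ = t' j.succ • b 0 k.succ - t' k.succ • b 0 j.succ := by
      have := hJ 0 j.succ k.succ
      rw [h0, hb' k.succ 0, smul_neg, add_assoc] at this
      rw [eq_neg_of_add_eq_zero_left this]
      abel
    rw [hcg, add_smul, hV, mul_comm, mul_smul, hJ', smul_sub]
  have hswap : ∑ j, ∑ k, g k j • t' k.succ • b 0 j.succ =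
      ∑ j, ∑ k, g j k • t' j.succ • b 0 k.succ := Finset.sum_comm
  calc ∑ i, ∑ j, N i j • b i j
      = ∑ j : Fin n, (N 0 j.succ • b 0 j.succ + N j.succ 0 • b j.succ 0) +
          ∑ j : Fin n, ∑ k : Fin n, N j.succ k.succ • b j.succ k.succ := by
        simp only [Fin.sum_univ_succ, hb, smul_zero, zero_add, Finset.sum_add_distrib]
        abel
    _ = 0 := by
        simp only [hfirst, hrest, Finset.sum_add_distrib, Finset.sum_sub_distrib]
        rw [hc, hswap]
        abel

lemma exists_ringHom_mvPolynomial_fin_succ (A : Type*) [CommRing A] (n : ℕ) :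
    ∃ φ : MvPolynomial (Fin n) A →+* MvPolynomial (Fin (n + 1)) A,
      (∀ j, φ (.X j) = .X j.succ) ∧ (∀ r, ∃ a q, r = φ a + .X 0 * q) ∧
      ∀ a q, φ a + .X 0 * q = 0 → a = 0 ∧ q = 0 := by
  let e := MvPolynomial.finSuccEquiv A n
  refine ⟨(e.symm : _ →+* _).comp C, fun j ↦ ?_, fun r ↦ ?_, fun a q h ↦ ?_⟩
  · simp [← MvPolynomial.finSuccEquiv_X_succ, e]
  · refine ⟨(e r).coeff 0, e.symm (e r).divX, e.injective ?_⟩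
    simpa [e, MvPolynomial.finSuccEquiv_X_zero, add_comm] using (X_mul_divX_add (e r)).symm
  · have h' : C a + X * e q = 0 := by
      simpa [e, MvPolynomial.finSuccEquiv_X_zero] using congrArg e h
    have ha : a = 0 := by simpa using congrArg (coeff · 0) h'
    have hq : e q = 0 := by simpa [ha] using h'
    exact ⟨ha, by simpa using hq⟩

theorem isKoszulExactOne_X (A : Type*) [CommRing A] (n : ℕ) :
    IsKoszulExactOne (MvPolynomial.X : Fin n → MvPolynomial (Fin n) A) := by
  induction n with
  | zero => exact fun f _ ↦ ⟨0, Subsingleton.elim _ _⟩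
  | succ n ih =>
    obtain ⟨φ, hX, hφ, hx⟩ := exists_ringHom_mvPolynomial_fin_succ A n
    exact ih.adjoin hφ hx rfl fun j ↦ (hX j).symm

theorem isKoszulExactTwo_X (A : Type*) [CommRing A] (n : ℕ) (V : Type*) [AddCommGroup V]
    [hV : Module (MvPolynomial (Fin n) A) V] :
    IsKoszulExactTwo V (MvPolynomial.X : Fin n → MvPolynomial (Fin n) A) := by
  induction n generalizing hV with
  | zero => exact fun b _ _ _ N _ ↦ by simp
  | succ n ih =>
    obtain ⟨φ, hX, hφ, hx⟩ := exists_ringHom_mvPolynomial_fin_succ A n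
    let := Module.compHom V φ
    exact ih.adjoin (fun _ _ ↦ rfl) hφ hx rfl fun j ↦ (hX j).symm

end Koszul

section Augmentation

open Polynomial

variable {R ι κ : Type*} [CommRing R] [Fintype ι] [DecidableEq ι] [Fintype κ] [DecidableEq κ]

lemma det_fromBlocks_smul {x : R} (hx : x ∈ nonZeroDivisors R) (P : Matrix ι ι R)
    (B : Matrix ι κ R) (C : Matrix κ ι R) (D : Matrix κ κ R) :
    (fromBlocks P B (x • C) D).det = (fromBlocks P (x • B) C D).det := by
  have h := congrArg det (show fromBlocks P B (x • C) D * fromBlocks 1 0 0 (x • 1) =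
    fromBlocks 1 0 0 (x • 1) * fromBlocks P (x • B) C D by simp [fromBlocks_multiply])
  simp only [det_mul, det_fromBlocks_zero₁₂, det_smul, det_one, mul_one, one_mul] at h
  rw [mul_comm] at h
  exact (mul_cancel_left_mem_nonZeroDivisors (pow_mem hx _)).1 h

lemma GLEquiv.sumElim_smul {x : R} (hx : x ∈ nonZeroDivisors R) {Q : GL (ι ⊕ κ) R}
    {B : Matrix ι κ R} (hQ : Q.1.toBlocks₁₂ = x • B) {a a' : ι → R} {b b' : κ → R}
    (h : Q.1 *ᵥ Sum.elim a b = Sum.elim a' b') :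
    GLEquiv (Sum.elim a (x • b)) (Sum.elim a' (x • b')) := by
  have hQ' := fromBlocks_toBlocks Q.1
  rw [hQ] at hQ'
  rw [← hQ', fromBlocks_mulVec, Sum.elim_eq_iff] at h
  have hdet := isUnit_det_coe Q
  rw [← hQ', ← det_fromBlocks_smul hx] at hdet
  convert GLEquiv.of_isUnit_det hdet (Sum.elim a (x • b))
  rw [fromBlocks_mulVec, ← h.1, ← h.2]
  simp [mulVec_smul, smul_mulVec, smul_add]

variable {A : Type*} [CommRing A]

lemma IsHermite.exists_mulVec_eval_zero_eq (hA : IsHermite A[X]) (i₀ : ι) {v : ι → A[X]}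
    (hv : IsUnimodular v) :
    ∃ Q : GL ι A[X], Q.1.map (eval 0) = 1 ∧ Q.1 *ᵥ (fun i ↦ C ((v i).eval 0)) = v := by
  obtain ⟨G, hG⟩ := hA.glEquiv_single i₀ hv
  let G₀ : GL ι A[X] := GeneralLinearGroup.map (C.comp (evalRingHom 0)) G
  have hG₀ : G₀.1 *ᵥ Pi.single i₀ 1 = fun i ↦ C ((v i).eval 0) := by
    ext1 i
    simp [G₀, ← hG]
  refine ⟨G * G₀⁻¹, ?_, ?_⟩
  · have : GeneralLinearGroup.map (evalRingHom 0) (G * G₀⁻¹) = 1 := by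
      rw [map_mul, map_inv, mul_inv_eq_one]
      ext i j
      simp [G₀]
    exact congrArg Units.val this
  · rw [← hG₀, Units.val_mul, ← mulVec_mulVec, mulVec_mulVec _ _ G₀.1, Units.inv_mul,
      one_mulVec, hG]

lemma IsHermite.glEquiv_sumElim_X_smul (hA : IsHermite A[X]) (k₀ : κ) {a : ι → A[X]}
    {b : κ → A[X]} (h : IsUnimodular (Sum.elim a b)) :
    GLEquiv (Sum.elim (fun i ↦ C ((a i).eval 0)) ((X : A[X]) • fun i ↦ C ((b i).eval 0)))
      (Sum.elim a ((X : A[X]) • b)) := by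
  obtain ⟨Q, hQ, hQv⟩ := hA.exists_mulVec_eval_zero_eq (.inr k₀) h
  have hdvd (i : ι) (k : κ) : X ∣ Q.1 (.inl i) (.inr k) := by
    rw [X_dvd_iff, coeff_zero_eq_eval_zero]
    simpa using congrFun (congrFun hQ (.inl i)) (.inr k)
  choose B hB using hdvd
  have hQ₁₂ : Q.1.toBlocks₁₂ = (X : A[X]) • of B := by
    ext1 i k
    exact hB i k
  have hv : (fun i ↦ C ((Sum.elim a b i).eval 0)) =
      Sum.elim (fun i ↦ C ((a i).eval 0)) fun i ↦ C ((b i).eval 0) := by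
    ext1 (i | i) <;> simp
  rw [hv] at hQv
  exact GLEquiv.sumElim_smul (X_mem_nonzeroDivisors (R := A)) hQ₁₂ hQv

end Augmentation

section Ideal

open Polynomial

variable {A R S ι κ : Type*} [CommRing A] [CommRing R] [CommRing S]

lemma exists_eq_X_smul {v : ι → A[X]} (hv : ∀ i, (v i).eval 0 = 0) :
    ∃ g : ι → A[X], v = (X : A[X]) • g := by
  choose g hg using fun i ↦ X_dvd_iff.2 ((coeff_zero_eq_eval_zero (v i)).trans (hv i))
  exact ⟨g, funext hg⟩

lemma span_range_map_eq (f : R →+* S) {a b : ι → R}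
    (h : Ideal.span (Set.range a) = Ideal.span (Set.range b)) :
    Ideal.span (Set.range fun i ↦ f (a i)) = Ideal.span (Set.range fun i ↦ f (b i)) := by
  have := congrArg (Ideal.map f) h
  rwa [Ideal.map_span, Ideal.map_span, ← Set.range_comp, ← Set.range_comp] at this

lemma exists_eq_constantCoeff_add_mulVec_X {r : ℕ} (c : κ → MvPolynomial (Fin r) A) :
    ∃ N : Matrix κ (Fin r) (MvPolynomial (Fin r) A),
      c = (fun i ↦ .C ((c i).constantCoeff)) + N *ᵥ MvPolynomial.X := by
  have hmem (i : κ) : c i - .C ((c i).constantCoeff) ∈ MvPolynomial.idealOfVars (Fin r) A := by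
    rw [← pow_one (MvPolynomial.idealOfVars _ _), MvPolynomial.mem_pow_idealOfVars_iff']
    intro x hx
    obtain rfl := (Finsupp.degree_eq_zero_iff x).1 (Nat.lt_one_iff.1 hx)
    simp [MvPolynomial.constantCoeff_eq]
  choose N hN using fun i ↦ exists_dotProduct_eq_of_mem_span (hmem i)
  exact ⟨of N, funext fun i ↦ eq_add_of_sub_eq' (hN i).symm⟩

variable [Fintype ι] [Fintype κ]

lemma IsKoszulExactOne.isUnimodular_sumElim {t : ι → A} (ht : IsKoszulExactOne t) {u : ι → A[X]}
    {c : κ → A[X]} (hu : ∀ i, (u i).eval 0 = t i)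
    (hX : X ∈ Ideal.span (Set.range (Sum.elim u ((X : A[X]) • c)))) :
    IsUnimodular (Sum.elim u c) := by
  obtain ⟨w, hw⟩ := exists_dotProduct_eq_of_mem_span hX
  obtain ⟨w₁, w₂, rfl⟩ : ∃ w₁ w₂, w = Sum.elim w₁ w₂ := ⟨_, _, (Sum.elim_comp_inl_inr w).symm⟩
  rw [sumElim_dotProduct_sumElim, dotProduct_smul] at hw
  obtain ⟨N, hN⟩ := ht (fun i ↦ (w₁ i).eval 0) <| by
    simpa [dotProduct, eval_finsetSum, hu] using congrArg (eval 0) hw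
  let N' : Matrix ι ι A[X] := N.map C
  have hN' (i : ι) : eval 0 (((N' - N'ᵀ) *ᵥ u) i) = eval 0 (w₁ i) := by
    rw [congrFun hN i]
    simp [N', mulVec, dotProduct, eval_finsetSum, hu]
  obtain ⟨g, hg⟩ := exists_eq_X_smul (v := w₁ - (N' - N'ᵀ) *ᵥ u) (by simp [hN'])
  refine ⟨Sum.elim g w₂, isRegular_X.left ?_⟩
  change X * _ = X * _
  calc X * (Sum.elim g w₂ ⬝ᵥ Sum.elim u c)
      = ((X : A[X]) • g) ⬝ᵥ u + (X : A[X]) • (w₂ ⬝ᵥ c) := by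
        rw [sumElim_dotProduct_sumElim, smul_dotProduct, ← smul_add, smul_eq_mul]
    _ = X * 1 := by
        rw [← hg, sub_dotProduct, sub_transpose_mulVec_dotProduct, sub_zero, hw, mul_one]

lemma GLEquiv.exists_eval_zero_eq [DecidableEq ι] {u : ι → A[X]} {w : ι → A}
    (h : GLEquiv (fun i ↦ (u i).eval 0) w) : ∃ v, GLEquiv u v ∧ ∀ i, (v i).eval 0 = w i := by
  obtain ⟨G, rfl⟩ := h
  refine ⟨_, ⟨GeneralLinearGroup.map C G, rfl⟩, fun i ↦ ?_⟩
  simp [mulVec, dotProduct, eval_finsetSum]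

variable {r : ℕ} [IsDomain A] [IsPrincipalIdealRing A] [DecidableEq κ]

lemma glEquiv_sumElim_smul_single (f : MvPolynomial (Fin r) A →+* R) (x : R) (k₀ : κ)
    {c : κ → MvPolynomial (Fin r) A} (hc : IsUnimodular (Sum.elim MvPolynomial.X c)) :
    GLEquiv (Sum.elim (fun j ↦ f (.X j)) (x • Pi.single k₀ 1))
      (Sum.elim (fun j ↦ f (.X j)) (x • fun i ↦ f (c i))) := by
  have hc₀ : IsUnimodular fun i ↦ (c i).constantCoeff := by
    obtain ⟨w, hw⟩ := hc.map MvPolynomial.constantCoeff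
    exact ⟨w ∘ Sum.inr, by simpa [dotProduct] using hw⟩
  have h := ((IsHermite.of_isPrincipalIdealRing.glEquiv_single k₀ hc₀).map
    (f.comp MvPolynomial.C)).smul x
  obtain ⟨N, hN⟩ := exists_eq_constantCoeff_add_mulVec_X c
  convert (h.sumElim_left fun j ↦ f (.X j)).trans
    (GLEquiv.sumElim_add_mulVec (fun j ↦ f (.X j)) _ (x • N.map f)) using 3
  · ext1 i
    simp [Pi.single_apply]
  · rw [smul_mulVec, ← smul_add]
    congr 1
    ext1 i
    conv_lhs => rw [congrFun hN i, Pi.add_apply, map_add, map_mulVec]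
    rfl

end Ideal

section SpanRigid

open Polynomial

variable {R S ι κ : Type*} [CommRing R] [CommRing S] [Fintype ι] [DecidableEq ι] [Fintype κ]
  [DecidableEq κ]

/-- Families that are determined, up to the general linear group, by the ideal they generate. -/
def IsSpanRigid (t : ι → R) : Prop :=
  ∀ u : ι → R, Ideal.span (Set.range u) = Ideal.span (Set.range t) → GLEquiv u t

lemma IsSpanRigid.of_ringEquiv {t : ι → R} (e : R ≃+* S) (h : IsSpanRigid fun i ↦ e (t i)) :
    IsSpanRigid t := by
  intro u hu
  simpa using (h (fun i ↦ e (u i)) (span_range_map_eq e.toRingHom hu)).map e.symm.toRingHom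

lemma IsSpanRigid.of_comp_equiv {t : ι → R} (e : κ ≃ ι) (h : IsSpanRigid (t ∘ e)) :
    IsSpanRigid t := by
  intro u hu
  exact (h (u ∘ e) (by simpa using hu)).of_comp_equiv e

variable {A : Type*} [CommRing A] [IsDomain A] [IsPrincipalIdealRing A] {r : ℕ}

lemma IsSpanRigid.sumElim_C_X
    (h : IsSpanRigid (Sum.elim MvPolynomial.X 0 : Fin r ⊕ κ → MvPolynomial (Fin r) A)) (k₀ : κ) :
    IsSpanRigid (Sum.elim (fun j ↦ C (.X j)) ((X : (MvPolynomial (Fin r) A)[X]) • Pi.single k₀ 1) :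
      Fin r ⊕ κ → (MvPolynomial (Fin r) A)[X]) := by
  intro u hu
  obtain ⟨v, huv, hv⟩ := GLEquiv.exists_eval_zero_eq <| h (fun i ↦ (u i).eval 0) <| by
    convert span_range_map_eq (evalRingHom 0) hu using 3
    · rfl
    · ext1 (j | k) <;> simp
  obtain ⟨a, b, rfl⟩ : ∃ a b, v = Sum.elim a b := ⟨_, _, (Sum.elim_comp_inl_inr v).symm⟩
  obtain ⟨c, rfl⟩ := exists_eq_X_smul (v := b) fun i ↦ hv (.inr i)
  replace hv (j) : (a j).eval 0 = .X j := hv (.inl j)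
  have hX : X ∈ Ideal.span (Set.range (Sum.elim a ((X : (MvPolynomial (Fin r) A)[X]) • c))) := by
    rw [← huv.span_range_eq, hu]
    exact Ideal.subset_span ⟨.inr k₀, by simp⟩
  have hac := (isKoszulExactOne_X A r).isUnimodular_sumElim hv hX
  have hc : IsUnimodular (Sum.elim MvPolynomial.X fun k ↦ (c k).eval 0) := by
    convert hac.map (evalRingHom 0) using 1
    ext1 (j | k) <;> simp [hv]
  have hHermite : IsHermite (MvPolynomial (Fin r) A)[X] :=
    (IsHermite.mvPolynomial A (Fin (r + 1))).of_ringEquiv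
      (MvPolynomial.finSuccEquiv A r).toRingEquiv
  have h₁ := hHermite.glEquiv_sumElim_X_smul k₀ hac
  simp_rw [hv] at h₁
  exact huv.trans (h₁.symm.trans (glEquiv_sumElim_smul_single C X k₀ hc).symm)

/-- Absorbs the successor in `Fin (k + 1)` into the second summand. -/
def finSumUnitSumEquiv (k : ℕ) (κ : Type*) : Fin k ⊕ (Unit ⊕ κ) ≃ Fin (k + 1) ⊕ κ :=
  (Equiv.sumAssoc _ _ _).symm.trans <|
    ((finSuccEquiv k).trans (Equiv.optionEquivSumPUnit _)).symm.sumCongr (Equiv.refl κ)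

theorem isSpanRigid_sumElim_X (A : Type*) [CommRing A] [IsDomain A] [IsPrincipalIdealRing A]
    (r : ℕ) (κ : Type*) [Fintype κ] [DecidableEq κ] :
    IsSpanRigid (Sum.elim MvPolynomial.X 0 : Fin r ⊕ κ → MvPolynomial (Fin r) A) := by
  induction r generalizing κ with
  | zero =>
    intro u hu
    have h₀ : (Sum.elim MvPolynomial.X 0 : Fin 0 ⊕ κ → MvPolynomial (Fin 0) A) = 0 := by
      ext1 (j | k)
      · exact j.elim0
      · rfl
    rw [h₀] at hu ⊢
    obtain rfl : u = 0 := by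
      ext1 i
      obtain ⟨w, hw⟩ := exists_dotProduct_eq_of_mem_span <|
        hu.le (Ideal.subset_span (Set.mem_range_self i))
      rw [← hw, dotProduct_zero, Pi.zero_apply]
    exact GLEquiv.refl 0
  | succ r ih =>
    refine .of_comp_equiv (finSumUnitSumEquiv r κ) ?_
    refine .of_ringEquiv (MvPolynomial.finSuccEquiv A r).toRingEquiv ?_
    convert (ih (Unit ⊕ κ)).sumElim_C_X (.inl ()) using 1
    ext1 (j | (_ | k))
    · simp [finSumUnitSumEquiv, MvPolynomial.finSuccEquiv_X_succ]
    · simp [finSumUnitSumEquiv, MvPolynomial.finSuccEquiv_X_zero]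
    · simp [finSumUnitSumEquiv]

theorem isSpanRigid_X (A : Type*) [CommRing A] [IsDomain A] [IsPrincipalIdealRing A] (σ : Type*)
    [Fintype σ] [DecidableEq σ] : IsSpanRigid (MvPolynomial.X : σ → MvPolynomial σ A) := by
  let e : Fin (Fintype.card σ) ⊕ Empty ≃ σ :=
    (Equiv.sumEmpty _ _).trans (Fintype.equivFin σ).symm
  refine .of_comp_equiv e ?_
  refine .of_ringEquiv (MvPolynomial.renameEquiv A (Fintype.equivFin σ)).toRingEquiv ?_
  convert isSpanRigid_sumElim_X A (Fintype.card σ) Empty using 1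
  ext1 (j | k)
  · simp [e]
  · exact k.elim

end SpanRigid

section Completion

variable {R ι κ μ : Type*} [CommRing R] [Fintype ι] [DecidableEq ι] [Finite κ]
  [Fintype μ] [DecidableEq μ]

lemma exists_blockLower (e : κ ⊕ μ ≃ ι) (N : Matrix μ κ R) {E : Matrix μ μ R}
    (hE : IsUnit E.det) :
    ∃ G : GL ι R, (∀ i, G.1 (e (.inl i)) = Pi.single (e (.inl i)) 1) ∧
      ∀ j, G.1 (e (.inr j)) = Sum.elim (N j) (E j) ∘ e.symm := by
  classical
  have := Fintype.ofFinite κ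
  have hdet : IsUnit ((fromBlocks 1 0 N E).submatrix e.symm e.symm).det := by
    rw [det_submatrix_equiv_self, det_fromBlocks_zero₁₂, det_one, one_mul]
    exact hE
  refine ⟨GeneralLinearGroup.mk'' _ hdet, fun i ↦ ?_, fun j ↦ ?_⟩
  · ext1 x
    obtain ⟨x | x, rfl⟩ := e.surjective x
    · simp [Matrix.one_apply, Pi.single_apply, eq_comm]
    · simp
  · ext1 x
    obtain ⟨x | x, rfl⟩ := e.surjective x <;> simp

lemma GL_mul_row (G H : GL ι R) (i : ι) : (G * H).1 i = G.1 i ᵥ* H.1 := rfl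

lemma IsHermite.exists_row_eq (hR : IsHermite R) (s : Finset ι) {a : ι} (ha : a ∉ s)
    {y z : ι → R} (hyz : y ⬝ᵥ z = 1) (hz : ∀ i ∈ s, z i = 0) :
    ∃ G : GL ι R, G.1 a = y ∧ ∀ i ∈ s, G.1 i = Pi.single i 1 := by
  let e : {i // i ∈ s} ⊕ {i // i ∉ s} ≃ ι := Equiv.sumCompl (· ∈ s)
  have hu : IsUnimodular fun i : {i // i ∉ s} ↦ y i := by
    refine ⟨fun i ↦ z i, ?_⟩
    rw [dotProduct_comm, ← hyz, ← comp_equiv_dotProduct_comp_equiv _ _ e]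
    simp [dotProduct, e, hz]
  obtain ⟨E, hE⟩ := (hR.glEquiv_single ⟨a, ha⟩ hu).exists_map_apply_eq
  obtain ⟨G, hG, hG'⟩ := exists_blockLower e (of fun _ i ↦ y i) (E := E.1ᵀ) <| by
    rw [det_transpose]
    exact isUnit_det_coe E
  refine ⟨G, ?_, fun i hi ↦ hG ⟨i, hi⟩⟩
  refine (hG' ⟨a, ha⟩).trans ?_
  ext1 x
  obtain ⟨x | x, rfl⟩ := e.surjective x
  · simp [e]
  · simpa [e] using hE x

lemma IsHermite.exists_rows_eq [DecidableEq κ] (hR : IsHermite R) (f : κ ↪ ι) {J : Matrix κ ι R}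
    {K : Matrix ι κ R} (hJK : J * K = 1) : ∃ D : GL ι R, ∀ i, D.1 (f i) = J i := by
  have := Fintype.ofFinite κ
  suffices h : ∀ s : Finset κ, ∃ D : GL ι R, ∀ i ∈ s, D.1 (f i) = J i by
    simpa using h Finset.univ
  intro s
  induction s using Finset.induction_on with
  | empty => exact ⟨1, by simp⟩
  | insert a s ha ih =>
    obtain ⟨D, hD⟩ := ih
    have hJKa : J a ᵥ* (D⁻¹).1 ⬝ᵥ D.1 *ᵥ K.col a = 1 := by
      rw [← dotProduct_mulVec, mulVec_mulVec, Units.inv_mul, one_mulVec]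
      exact (congrFun (congrFun hJK a) a).trans (one_apply_eq a)
    have hDK : ∀ i ∈ s.map f, (D.1 *ᵥ K.col a) i = 0 := by
      intro i hi
      obtain ⟨j, hj, rfl⟩ := Finset.mem_map.1 hi
      change D.1 (f j) ⬝ᵥ K.col a = 0
      rw [hD j hj]
      exact (congrFun (congrFun hJK j) a).trans (one_apply_ne (ne_of_mem_of_not_mem hj ha))
    obtain ⟨G, hGa, hG⟩ := hR.exists_row_eq (s.map f) (a := f a) (by simpa using ha) hJKa hDK
    refine ⟨G * D, fun i hi ↦ ?_⟩
    rw [GL_mul_row]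
    rcases Finset.mem_insert.1 hi with rfl | hi
    · rw [hGa, vecMul_vecMul, Units.inv_mul, vecMul_one]
    · rw [hG _ (Finset.mem_map_of_mem f hi), single_one_vecMul, ← hD i hi]
      rfl

end Completion

section Variables

open MvPolynomial

variable {A ι κ μ : Type*} [CommRing A]

variable (A) in
/-- The specialization of polynomials in two blocks of variables at `0` in the first block. -/
noncomputable def killInl (e : κ ⊕ μ ≃ ι) : MvPolynomial ι A →ₐ[A] MvPolynomial μ A :=
  killCompl (e.injective.comp Sum.inr_injective)

@[simp]
lemma killInl_X_inl (e : κ ⊕ μ ≃ ι) (i : κ) : killInl A e (X (e (.inl i))) = 0 := by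
  simp [killInl, killCompl]

lemma killInl_rename (e : κ ⊕ μ ≃ ι) (p : MvPolynomial μ A) :
    killInl A e (rename (e ∘ Sum.inr) p) = p :=
  killCompl_rename_app _ p

@[simp]
lemma killInl_X_inr (e : κ ⊕ μ ≃ ι) (j : μ) : killInl A e (X (e (.inr j))) = X j := by
  simpa using killInl_rename e (X j : MvPolynomial μ A)

lemma exists_dotProduct_X_eq_of_killInl_eq_zero [Fintype κ] (e : κ ⊕ μ ≃ ι)
    {p : MvPolynomial ι A} (hp : killInl A e p = 0) :
    ∃ w : κ → MvPolynomial ι A, w ⬝ᵥ (fun i ↦ X (e (.inl i))) = p := by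
  apply exists_dotProduct_eq_of_mem_span
  set I := Ideal.span (Set.range fun i : κ ↦ (X (e (.inl i)) : MvPolynomial ι A))
  have h : ((Ideal.Quotient.mkₐ A I).comp (rename (e ∘ Sum.inr))).comp (killInl A e) =
      Ideal.Quotient.mkₐ A I := by
    ext x
    obtain ⟨i | j, rfl⟩ := e.surjective x
    · have hi : X (e (.inl i)) ∈ I := Ideal.subset_span ⟨i, rfl⟩
      simp [Ideal.Quotient.eq_zero_iff_mem.2 hi]
    · simp
  have := DFunLike.congr_fun h p
  rw [AlgHom.comp_apply, hp, map_zero] at this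
  exact Ideal.Quotient.eq_zero_iff_mem.1 this.symm

lemma span_range_comp_equiv_inr {R : Type*} [CommRing R] (e : κ ⊕ μ ≃ ι) {v : ι → R}
    (hv : ∀ i, v (e (.inl i)) = 0) :
    Ideal.span (Set.range v) = Ideal.span (Set.range fun j ↦ v (e (.inr j))) := by
  apply le_antisymm <;> rw [Ideal.span_le]
  · rintro _ ⟨x, rfl⟩
    obtain ⟨i | j, rfl⟩ := e.surjective x
    · simp [hv]
    · exact Ideal.subset_span ⟨j, rfl⟩
  · rintro _ ⟨j, rfl⟩
    exact Ideal.subset_span ⟨_, rfl⟩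

lemma map_constantCoeff_eq_of_mulVec_X_eq [Fintype ι] {J : Matrix κ ι (MvPolynomial ι A)}
    {L : Matrix κ ι A} (h : J *ᵥ X = L.map C *ᵥ X) : J.map constantCoeff = L := by
  classical
  ext i j
  simpa [mulVec, dotProduct, pderiv_X, Pi.single_apply, apply_ite] using
    congrArg (fun p ↦ constantCoeff (pderiv j p)) (congrFun h i)

lemma exists_algEquiv_X_eq [Fintype ι] [DecidableEq ι] (B : GL ι A) :
    ∃ φ : MvPolynomial ι A ≃ₐ[A] MvPolynomial ι A, ∀ i, φ (X i) = (B.1.map C *ᵥ X) i := by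
  have h (B B' : GL ι A) (hB : B' * B = 1) :
      (aeval (B.1.map C *ᵥ X : ι → MvPolynomial ι A)).comp (aeval (B'.1.map C *ᵥ X)) =
        AlgHom.id A _ := by
    ext1 i
    rw [AlgHom.comp_apply, aeval_X, map_mulVec]
    have hC : (B'.1.map C).map (aeval (B.1.map C *ᵥ X : ι → MvPolynomial ι A)) = B'.1.map C := by
      ext1 i j
      simp
    simp only [hC, aeval_X]
    rw [mulVec_mulVec, ← Matrix.map_mul, ← Units.val_mul, hB, Units.val_one,
      Matrix.map_one _ C_0 C_1, one_mulVec, AlgHom.id_apply]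
  exact ⟨AlgEquiv.ofAlgHom (aeval (B.1.map C *ᵥ X)) (aeval ((B⁻¹).1.map C *ᵥ X))
    (h _ _ (inv_mul_cancel B)) (h _ _ (mul_inv_cancel B)), by simp⟩

variable [IsDomain A] [IsPrincipalIdealRing A] [Fintype ι] [DecidableEq ι] [Finite κ]

lemma exists_mulVec_eq_X [Finite μ] (e : κ ⊕ μ ≃ ι) {u : ι → MvPolynomial ι A}
    (hu : Ideal.span (Set.range u) = Ideal.span (Set.range X))
    (hu' : ∀ i, u (e (.inl i)) = X (e (.inl i))) :
    ∃ G : GL ι (MvPolynomial ι A), G.1 *ᵥ u = X ∧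
      ∀ i, G.1 (e (.inl i)) = Pi.single (e (.inl i)) 1 := by
  classical
  have := Fintype.ofFinite κ
  have := Fintype.ofFinite μ
  obtain ⟨E, hE⟩ : GLEquiv (fun j ↦ killInl A e (u (e (.inr j)))) X := by
    apply isSpanRigid_X A μ
    have h := span_range_map_eq (killInl A e).toRingHom hu
    rw [span_range_comp_equiv_inr e (by simp [hu']), span_range_comp_equiv_inr e (by simp)] at h
    simpa using h
  let ρ : MvPolynomial μ A →ₐ[A] MvPolynomial ι A := rename (e ∘ Sum.inr)
  have hN (j : μ) : ∃ w : κ → MvPolynomial ι A, w ⬝ᵥ (fun i ↦ X (e (.inl i))) =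
      X (e (.inr j)) - (E.1.map ρ *ᵥ fun j ↦ u (e (.inr j))) j := by
    apply exists_dotProduct_X_eq_of_killInl_eq_zero
    rw [map_sub, map_mulVec, killInl_X_inr, sub_eq_zero, ← congrFun hE j]
    simp only [ρ, map_apply, killInl_rename, mulVec]
  choose N hN using hN
  have hdet : IsUnit (E.1.map ρ).det := isUnit_det_coe (GeneralLinearGroup.map ρ.toRingHom E)
  obtain ⟨G, hG, hG'⟩ := exists_blockLower e (of N) hdet
  refine ⟨G, ?_, hG⟩
  ext1 x
  obtain ⟨i | j, rfl⟩ := e.surjective x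
  · change G.1 _ ⬝ᵥ u = _
    rw [hG, single_one_dotProduct, hu']
  · change G.1 _ ⬝ᵥ u = _
    rw [hG', ← comp_equiv_dotProduct_comp_equiv _ _ e, Function.comp_assoc, e.symm_comp_self,
      Function.comp_id, ← Sum.elim_comp_inl_inr (u ∘ e), sumElim_dotProduct_sumElim]
    simp only [Function.comp_def, hu']
    exact add_eq_of_eq_sub (hN j)

lemma exists_mulVec_X_eq_X [Finite μ] [DecidableEq κ] (e : κ ⊕ μ ≃ ι)
    {J : Matrix κ ι (MvPolynomial ι A)} {K : Matrix ι κ (MvPolynomial ι A)} (hJK : J * K = 1)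
    (hJ : ∀ i, (J *ᵥ X) i = X (e (.inl i))) :
    ∃ D : GL ι (MvPolynomial ι A), D.1 *ᵥ X = X ∧ ∀ i, D.1 (e (.inl i)) = J i := by
  obtain ⟨D, hD⟩ := (IsHermite.mvPolynomial A ι).exists_rows_eq
    (Function.Embedding.inl.trans e.toEmbedding) hJK
  replace hD (i) : D.1 (e (.inl i)) = J i := hD i
  obtain ⟨G, hG, hGe⟩ := exists_mulVec_eq_X e (GLEquiv.span_range_eq ⟨D, rfl⟩).symm fun i ↦ by
    rw [← hJ i, mulVec, hD, mulVec]
  refine ⟨G * D, by rw [Units.val_mul, ← mulVec_mulVec, hG], fun i ↦ ?_⟩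
  rw [GL_mul_row, hGe, single_one_vecMul, ← hD]
  rfl

theorem exists_rows_eq_of_mulVec_X_eq [Finite μ] [DecidableEq κ] (e : κ ⊕ μ ≃ ι)
    {J : Matrix κ ι (MvPolynomial ι A)} {K : Matrix ι κ (MvPolynomial ι A)} {L : Matrix κ ι A}
    (hJK : J * K = 1) (hJ : J *ᵥ X = L.map C *ᵥ X) :
    ∃ (D : GL ι (MvPolynomial ι A)) (B : GL ι A), D.1 *ᵥ X = B.1.map C *ᵥ X ∧
      (∀ i, D.1 (e (.inl i)) = J i) ∧ ∀ i, B.1 (e (.inl i)) = L i := by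
  have hLK : L * K.map constantCoeff = 1 := by
    rw [← map_constantCoeff_eq_of_mulVec_X_eq hJ, ← Matrix.map_mul, hJK]
    simp
  obtain ⟨B, hB⟩ := IsHermite.of_isPrincipalIdealRing.exists_rows_eq
    (Function.Embedding.inl.trans e.toEmbedding) hLK
  obtain ⟨φ, hφ⟩ := exists_algEquiv_X_eq B
  let B' : GL ι (MvPolynomial ι A) := GeneralLinearGroup.map C B
  replace hφ : (fun i ↦ φ (X i)) = B'.1 *ᵥ X := funext hφ
  have hmap (P : Matrix κ ι (MvPolynomial ι A)) : (P.map φ.symm).map φ = P := by ext1; simp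
  have hJK' : (J * (B'⁻¹).1).map φ.symm * (B'.1 * K).map φ.symm = 1 := by
    rw [← Matrix.map_mul, Matrix.mul_assoc, ← Matrix.mul_assoc _ B'.1, Units.inv_mul,
      Matrix.one_mul, hJK, Matrix.map_one _ (map_zero _) (map_one _)]
  have hJ' (i : κ) : ((J * (B'⁻¹).1).map φ.symm *ᵥ X) i = X (e (.inl i)) := by
    apply φ.injective
    rw [map_mulVec, hmap, hφ, mulVec_mulVec, Matrix.mul_assoc, Units.inv_mul, Matrix.mul_one, hJ,
      congrFun hφ]
    exact congrArg (fun p ↦ (C ∘ p) ⬝ᵥ X) (hB i).symm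
  obtain ⟨D, hDX, hD⟩ := exists_mulVec_X_eq_X e hJK' hJ'
  refine ⟨GeneralLinearGroup.map φ.toRingEquiv.toRingHom D * B', B, ?_, fun i ↦ ?_, hB⟩
  · rw [Units.val_mul, ← mulVec_mulVec, ← hφ]
    ext1 i
    exact (map_mulVec φ.toRingEquiv.toRingHom D.1 X i).symm.trans <|
      (congrArg φ (congrFun hDX i)).trans (congrFun hφ i)
  · rw [GL_mul_row]
    have hrow : (GeneralLinearGroup.map φ.toRingEquiv.toRingHom D).1 (e (.inl i)) =
        (J * (B'⁻¹).1) i := by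
      rw [← hmap (J * (B'⁻¹).1)]
      exact congrArg (φ ∘ ·) (hD i)
    rw [hrow]
    change (J * (B'⁻¹).1 * B'.1) i = J i
    rw [Matrix.mul_assoc, Units.inv_mul, Matrix.mul_one]

end Variables

section Metabelian

/-- Metabelian Lie rings; the condition is the identity used in `IsFreeGenSet` and
`IsUniformlyDistributed`. -/
def IsMetabelian (L : Type*) [LieRing L] : Prop := ∀ a b c d : L, ⁅⁅a, b⁆, ⁅c, d⁆⁆ = 0

variable {R L : Type*} [CommRing R] [LieRing L] [LieAlgebra R L]

lemma lie_mem_derivedSeries_one (a b : L) : ⁅a, b⁆ ∈ LieAlgebra.derivedSeries R L 1 :=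
  LieSubmodule.lie_mem_lie (LieSubmodule.mem_top a) (LieSubmodule.mem_top b)

lemma mem_derivedSeries_one_iff {x : L} :
    x ∈ LieAlgebra.derivedSeries R L 1 ↔ x ∈ Submodule.span R {⁅a, b⁆ | (a : L) (b : L)} := by
  rw [← LieAlgebra.coe_derivedSeries_one_eq]
  rfl

theorem IsMetabelian.lie_eq_zero (hL : IsMetabelian L) {x y : L}
    (hx : x ∈ LieAlgebra.derivedSeries R L 1) (hy : y ∈ LieAlgebra.derivedSeries R L 1) :
    ⁅x, y⁆ = 0 := by
  rw [mem_derivedSeries_one_iff] at hx hy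
  induction hx, hy using Submodule.span_induction₂ with
  | mem_mem _ _ hx hy =>
    obtain ⟨⟨a, b, rfl⟩, c, d, rfl⟩ := And.intro hx hy
    exact hL a b c d
  | zero_left => rw [zero_lie]
  | zero_right => rw [lie_zero]
  | add_left _ _ _ _ _ _ h₁ h₂ => rw [add_lie, h₁, h₂, add_zero]
  | add_right _ _ _ _ _ _ h₁ h₂ => rw [lie_add, h₁, h₂, add_zero]
  | smul_left _ _ _ _ _ h => rw [smul_lie, h, smul_zero]
  | smul_right _ _ _ _ _ h => rw [lie_smul, h, smul_zero]

theorem IsMetabelian.derivedSeries_two (hL : IsMetabelian L) :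
    LieAlgebra.derivedSeries R L 2 = ⊥ :=
  (LieSubmodule.lie_eq_bot_iff _ _).2 fun _ hx _ hy ↦ hL.lie_eq_zero hx hy

theorem IsMetabelian.map_eq_zero {L' : Type*} [LieRing L'] [LieAlgebra R L']
    (hL : IsMetabelian L) (f : L' →ₗ⁅R⁆ L) {z : L'} (hz : z ∈ LieAlgebra.derivedSeries R L' 2) :
    f z = 0 := by
  have h := LieIdeal.derivedSeries_map_le (f := f) 2 (LieIdeal.mem_map hz)
  rwa [hL.derivedSeries_two, LieSubmodule.mem_bot] at h

end Metabelian

/-- The homomorphism induced on the quotient by a Lie ideal on which `f` vanishes. -/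
def quotientLift {R L L' : Type*} [CommRing R] [LieRing L] [LieAlgebra R L] [LieRing L']
    [LieAlgebra R L'] (I : LieIdeal R L) (f : L →ₗ⁅R⁆ L') (h : ∀ z ∈ I, f z = 0) :
    L ⧸ I →ₗ⁅R⁆ L' where
  __ := I.toSubmodule.liftQ f.toLinearMap h
  map_lie' {x y} := by
    obtain ⟨x, rfl⟩ := LieSubmodule.Quotient.surjective_mk' I x
    obtain ⟨y, rfl⟩ := LieSubmodule.Quotient.surjective_mk' I y
    exact f.map_lie x y

section UniversalProperty

variable {n : ℕ} {L : Type*} [LieRing L] [LieAlgebra ℤ L]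

/-- `mkM` as a homomorphism of Lie rings. -/
noncomputable def mkHom (n : ℕ) : FreeLieAlgebra ℤ (Fin n) →ₗ⁅ℤ⁆ M n where
  __ := LieSubmodule.Quotient.mk' (LieAlgebra.derivedSeries ℤ (FreeLieAlgebra ℤ (Fin n)) 2)
  map_lie' := rfl

lemma mkHom_surjective (n : ℕ) : Function.Surjective (mkHom n) :=
  LieSubmodule.Quotient.surjective_mk' _

theorem isMetabelian_M (n : ℕ) : IsMetabelian (M n) := by
  intro a b c d
  obtain ⟨a, rfl⟩ := mkHom_surjective n a
  obtain ⟨b, rfl⟩ := mkHom_surjective n b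
  obtain ⟨c, rfl⟩ := mkHom_surjective n c
  obtain ⟨d, rfl⟩ := mkHom_surjective n d
  simp only [← LieHom.map_lie]
  exact (LieSubmodule.Quotient.mk_eq_zero _).2 <|
    LieSubmodule.lie_mem_lie (lie_mem_derivedSeries_one a b) (lie_mem_derivedSeries_one c d)

/-- The class of the generator `x_i` in the free metabelian Lie ring. -/
noncomputable def gen (i : Fin n) : M n := mkHom n (FreeLieAlgebra.of ℤ i)

/-- The homomorphism from the free metabelian Lie ring with prescribed values on generators. -/
noncomputable def lift (hL : IsMetabelian L) (f : Fin n → L) : M n →ₗ⁅ℤ⁆ L :=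
  quotientLift _ (FreeLieAlgebra.lift ℤ f) fun _ hz ↦ hL.map_eq_zero _ hz

@[simp]
lemma lift_gen (hL : IsMetabelian L) (f : Fin n → L) (i : Fin n) : lift hL f (gen i) = f i :=
  FreeLieAlgebra.lift_of_apply f i

theorem hom_ext {φ ψ : M n →ₗ⁅ℤ⁆ L} (h : ∀ i, φ (gen i) = ψ (gen i)) : φ = ψ := by
  have hcomp : φ.comp (mkHom n) = ψ.comp (mkHom n) := FreeLieAlgebra.hom_ext h
  ext z
  obtain ⟨z, rfl⟩ := mkHom_surjective n z
  exact DFunLike.congr_fun hcomp z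

lemma eq_lift (φ : M n →ₗ⁅ℤ⁆ L) (hL : IsMetabelian L) : φ = lift hL fun i ↦ φ (gen i) :=
  hom_ext fun i ↦ (lift_gen hL (fun i ↦ φ (gen i)) i).symm

theorem isFreeGenSet_gen (n : ℕ) : IsFreeGenSet n gen := fun _ _ _ hL f ↦
  ⟨lift hL f, lift_gen hL f, fun _ hφ ↦ hom_ext fun i ↦ (hφ i).trans (lift_gen hL f i).symm⟩

theorem lieSubalgebra_eq_top {S : LieSubalgebra ℤ (M n)} (h : ∀ i, gen i ∈ S) : S = ⊤ := by
  have hS : IsMetabelian S := fun a b c d ↦ Subtype.ext (isMetabelian_M n a b c d)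
  let φ : M n →ₗ⁅ℤ⁆ S := lift hS fun i ↦ ⟨gen i, h i⟩
  have hφ : S.incl.comp φ = LieHom.id := hom_ext fun i ↦ by simp [φ]
  refine eq_top_iff.2 fun z _ ↦ ?_
  have hz : (φ z : M n) = z := DFunLike.congr_fun hφ z
  exact hz ▸ (φ z).2

theorem addSubgroup_eq_top {N : AddSubgroup (M n)} (h : ∀ i, gen i ∈ N)
    (hlie : ∀ i, ∀ z ∈ N, ⁅(gen i : M n), z⁆ ∈ N) : N = ⊤ := by
  let stabilizer : LieSubalgebra ℤ (M n) :=
    { carrier := {y | ∀ z ∈ N, ⁅y, z⁆ ∈ N}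
      add_mem' := fun ha hb z hz ↦ by rw [add_lie]; exact N.add_mem (ha z hz) (hb z hz)
      zero_mem' := fun z _ ↦ by rw [zero_lie]; exact N.zero_mem
      smul_mem' := fun c a ha z hz ↦ by rw [smul_lie]; exact N.zsmul_mem (ha z hz) c
      lie_mem' := fun ha hb z hz ↦ by
        rw [lie_lie]; exact N.sub_mem (ha _ (hb z hz)) (hb _ (ha z hz)) }
  have hstab : stabilizer = ⊤ := lieSubalgebra_eq_top hlie
  let S : LieSubalgebra ℤ (M n) :=
    { AddSubgroup.toIntSubmodule N with
      lie_mem' := fun {a b} _ hb ↦ (hstab ▸ LieSubalgebra.mem_top a : a ∈ stabilizer) b hb }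
  have hS : S = ⊤ := lieSubalgebra_eq_top h
  exact (AddSubgroup.eq_top_iff' N).2 fun z ↦ (hS ▸ LieSubalgebra.mem_top z : z ∈ S)

end UniversalProperty

section SplitExtension

variable {A S V : Type*} [AddCommGroup A] [CommRing S] [AddCommGroup V] {α : A →+ S}

/-- The split extension `A ⋉ V` of the abelian Lie ring `A`, acting on the `S`-module `V` through
`α : A →+ S`, by the abelian ideal `V`. -/
@[ext]
structure SplitExtension (α : A →+ S) (V : Type*) where
  fst : A
  snd : V

namespace SplitExtension

/-- The underlying additive group of `A ⋉ V` is `A × V`. -/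
def equivProd (α : A →+ S) (V : Type*) : SplitExtension α V ≃ A × V where
  toFun x := (x.fst, x.snd)
  invFun x := ⟨x.1, x.2⟩

instance [Finite A] [Finite V] : Finite (SplitExtension α V) :=
  Finite.of_equiv _ (equivProd α V).symm

instance : AddCommGroup (SplitExtension α V) := (equivProd α V).addCommGroup

@[simp] lemma fst_add (x y : SplitExtension α V) : (x + y).fst = x.fst + y.fst := rfl
@[simp] lemma snd_add (x y : SplitExtension α V) : (x + y).snd = x.snd + y.snd := rfl
@[simp] lemma fst_zero : (0 : SplitExtension α V).fst = 0 := rfl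
@[simp] lemma snd_zero : (0 : SplitExtension α V).snd = 0 := rfl

@[simp]
lemma fst_zsmul (c : ℤ) (x : SplitExtension α V) : (c • x).fst = c • x.fst := rfl

@[simp]
lemma snd_zsmul (c : ℤ) (x : SplitExtension α V) : (c • x).snd = c • x.snd := rfl

@[simp]
lemma fst_sum {ι : Type*} (s : Finset ι) (x : ι → SplitExtension α V) :
    (∑ i ∈ s, x i).fst = ∑ i ∈ s, (x i).fst :=
  map_sum (AddMonoidHom.mk' fst fst_add) x s

@[simp]
lemma snd_sum {ι : Type*} (s : Finset ι) (x : ι → SplitExtension α V) :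
    (∑ i ∈ s, x i).snd = ∑ i ∈ s, (x i).snd :=
  map_sum (AddMonoidHom.mk' snd snd_add) x s

variable [Module S V]

instance : Bracket (SplitExtension α V) (SplitExtension α V) where
  bracket x y := ⟨0, α x.fst • y.snd - α y.fst • x.snd⟩

@[simp] lemma fst_lie (x y : SplitExtension α V) : ⁅x, y⁆.fst = 0 := rfl
@[simp] lemma snd_lie (x y : SplitExtension α V) :
    ⁅x, y⁆.snd = α x.fst • y.snd - α y.fst • x.snd := rfl

instance : LieRing (SplitExtension α V) where
  add_lie x y z := by
    ext
    · simp
    · simp only [snd_lie, snd_add, fst_add, map_add]; module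
  lie_add x y z := by
    ext
    · simp
    · simp only [snd_lie, snd_add, fst_add, map_add]; module
  lie_self x := by ext <;> simp
  leibniz_lie x y z := by
    ext
    · simp
    · simp only [snd_lie, snd_add, fst_lie, map_zero]; module

theorem isMetabelian (α : A →+ S) (V : Type*) [AddCommGroup V] [Module S V] :
    IsMetabelian (SplitExtension α V) := by
  intro a b c d
  ext
  · rfl
  · rw [snd_lie, fst_lie, fst_lie, map_zero, zero_smul, zero_smul, sub_zero, snd_zero]

end SplitExtension

end SplitExtension

section Magnus

open MvPolynomial

variable {σ A S V : Type*} [Fintype σ] [AddCommGroup A] [CommRing S] [AddCommGroup V] [Module S V]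

/-- The linear form with coefficients `a`. -/
noncomputable def linearForm (σ : Type*) [Fintype σ] : (σ → ℤ) →+ MvPolynomial σ ℤ :=
  AddMonoidHom.mk' (fun a ↦ (C ∘ a) ⬝ᵥ X) fun a b ↦ by
    simp [dotProduct, add_mul, Finset.sum_add_distrib]

lemma linearForm_apply (a : σ → ℤ) : linearForm σ a = (C ∘ a) ⬝ᵥ X := rfl

@[simp]
lemma linearForm_single [DecidableEq σ] (i : σ) : linearForm σ (Pi.single i 1) = X i := by
  simp [linearForm_apply, dotProduct, Pi.single_apply, apply_ite]

lemma aeval_linearForm (α : A →+ S) (b : σ → A) (a : σ → ℤ) :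
    aeval (α ∘ b) (linearForm σ a) = α (∑ i, a i • b i) := by
  simp [linearForm_apply, dotProduct]

/-- The split extension receiving the Magnus embedding of the free metabelian Lie ring on `σ`. -/
abbrev MagnusRing (σ : Type*) [Fintype σ] := SplitExtension (linearForm σ) (σ → MvPolynomial σ ℤ)

/-- The homomorphism sending the `i`-th Magnus generator to `(b i, d i)`. -/
noncomputable def magnusMap (α : A →+ S) (b : σ → A) (d : σ → V) :
    MagnusRing σ →ₗ⁅ℤ⁆ SplitExtension α V where
  __ := (AddMonoidHom.mk' (fun x : MagnusRing σ ↦ (⟨∑ i, x.fst i • b i,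
    ∑ i, aeval (α ∘ b) (x.snd i) • d i⟩ : SplitExtension α V)) fun x y ↦ by
      ext <;> simp [add_smul, Finset.sum_add_distrib]).toIntLinearMap
  map_lie' {x y} := by
    ext
    · simp
    · simp only [AddMonoidHom.coe_toIntLinearMap, AddMonoidHom.mk'_apply, AddHom.toFun_eq_coe,
        LinearMap.coe_toAddHom, SplitExtension.snd_lie, ← aeval_linearForm]
      simp [sub_smul, mul_smul, Finset.sum_sub_distrib, Finset.smul_sum]

@[simp]
lemma fst_magnusMap (α : A →+ S) (b : σ → A) (d : σ → V) (x : MagnusRing σ) :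
    (magnusMap α b d x).fst = ∑ i, x.fst i • b i := rfl

@[simp]
lemma snd_magnusMap (α : A →+ S) (b : σ → A) (d : σ → V) (x : MagnusRing σ) :
    (magnusMap α b d x).snd = ∑ i, aeval (α ∘ b) (x.snd i) • d i := rfl

end Magnus

section Action

open MvPolynomial
open scoped IsMulCommutative

lemma exists_algHom_mvPolynomial {R E σ : Type*} [CommRing R] [Ring E] [Algebra R E] (T : σ → E)
    (hT : ∀ i j, T i * T j = T j * T i) :
    ∃ φ : MvPolynomial σ R →ₐ[R] E, ∀ i, φ (X i) = T i := by
  have := Algebra.isMulCommutative_adjoin R (s := Set.range T) <| by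
    rintro _ ⟨i, rfl⟩ _ ⟨j, rfl⟩
    exact hT i j
  let t (i : σ) : Algebra.adjoin R (Set.range T) := ⟨T i, Algebra.subset_adjoin ⟨i, rfl⟩⟩
  exact ⟨(Algebra.adjoin R (Set.range T)).val.comp (aeval t), by simp [t]⟩

theorem IsMetabelian.exists_algHom_toEnd {R L σ : Type*} [CommRing R] [LieRing L] [LieAlgebra R L]
    (hL : IsMetabelian L) (x : σ → L) :
    ∃ φ : MvPolynomial σ R →ₐ[R] Module.End R (LieAlgebra.derivedSeries R L 1),
      ∀ i, φ (X i) = LieModule.toEnd R L _ (x i) := by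
  refine exists_algHom_mvPolynomial _ fun i j ↦ ?_
  ext v
  have hv := hL.lie_eq_zero (R := R) (lie_mem_derivedSeries_one (x i) (x j)) v.2
  exact (leibniz_lie (x i) (x j) (v : L)).trans (by rw [hv, zero_add]; rfl)

end Action

section MagnusEmbedding

open MvPolynomial

variable {n : ℕ}

/-- The Magnus representation of the free metabelian Lie ring. -/
noncomputable def magnus (n : ℕ) : M n →ₗ⁅ℤ⁆ MagnusRing (Fin n) :=
  lift (SplitExtension.isMetabelian _ _) fun i ↦ ⟨Pi.single i 1, Pi.single i 1⟩

@[simp]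
lemma magnus_gen (i : Fin n) : magnus n (gen i) = ⟨Pi.single i 1, Pi.single i 1⟩ :=
  lift_gen _ _ i

theorem magnusMap_comp_magnus {A S V : Type*} [AddCommGroup A] [CommRing S] [AddCommGroup V]
    [Module S V] (α : A →+ S) (b : Fin n → A) (d : Fin n → V) :
    (magnusMap α b d).comp (magnus n) =
      lift (SplitExtension.isMetabelian α V) fun i ↦ ⟨b i, d i⟩ := by
  refine hom_ext fun i ↦ ?_
  rw [LieHom.comp_apply, magnus_gen, lift_gen]
  ext
  · simp [Pi.single_apply]
  · simp [Pi.single_apply, apply_ite]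

/-- The derived ideal of the free metabelian Lie ring. -/
noncomputable abbrev derivedIdeal (n : ℕ) : LieIdeal ℤ (M n) := LieAlgebra.derivedSeries ℤ (M n) 1

/-- `X i` acts on the derived ideal as the bracket with the generator `x_i`. -/
noncomputable instance : Module (MvPolynomial (Fin n) ℤ) (derivedIdeal n) :=
  Module.compHom _ ((isMetabelian_M n).exists_algHom_toEnd gen).choose.toRingHom

lemma coe_X_smul (i : Fin n) (v : derivedIdeal n) :
    ((X i : MvPolynomial (Fin n) ℤ) • v : derivedIdeal n) = ⁅(gen i : M n), (v : M n)⁆ :=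
  congrArg Subtype.val
    (DFunLike.congr_fun (((isMetabelian_M n).exists_algHom_toEnd gen).choose_spec i) v)

lemma C_smul (a : ℤ) (v : derivedIdeal n) : (C a : MvPolynomial (Fin n) ℤ) • v = a • v :=
  DFunLike.congr_fun (((isMetabelian_M n).exists_algHom_toEnd gen).choose.commutes a) v

lemma fst_magnus_of_mem {v : M n} (hv : v ∈ derivedIdeal n) : (magnus n v).fst = 0 := by
  rw [mem_derivedSeries_one_iff] at hv
  induction hv using Submodule.span_induction with
  | mem _ h =>
    obtain ⟨x, y, rfl⟩ := h
    simp
  | zero => simp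
  | add _ _ _ _ hx hy => simp [hx, hy]
  | smul c x _ h => rw [map_smul, SplitExtension.fst_zsmul, h, smul_zero]

/-- The Magnus representation of the derived ideal is linear over the polynomial ring. -/
noncomputable def magnusDerived (n : ℕ) :
    derivedIdeal n →ₗ[MvPolynomial (Fin n) ℤ] Fin n → MvPolynomial (Fin n) ℤ where
  toFun v := (magnus n v).snd
  map_add' v w := by simp
  map_smul' p v := by
    rw [RingHom.id_apply]
    induction p using MvPolynomial.induction_on generalizing v with
    | C a =>
      rw [C_smul, LieSubmodule.coe_smul, map_smul, SplitExtension.snd_zsmul]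
      ext
      simp
    | add p q hp hq =>
      rw [add_smul, LieSubmodule.coe_add, map_add, SplitExtension.snd_add, hp, hq, add_smul]
    | mul_X p i h =>
      rw [mul_smul, h, mul_smul, coe_X_smul, LieHom.map_lie,
        SplitExtension.snd_lie, fst_magnus_of_mem v.2, map_zero, zero_smul, sub_zero, magnus_gen]
      simp

lemma magnus_coe_derivedIdeal (v : derivedIdeal n) : magnus n v = ⟨0, magnusDerived n v⟩ :=
  SplitExtension.ext (fst_magnus_of_mem v.2) rfl

/-- The commutators of the generators; with this order of arguments `N` in `ofCoeffs` contributes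
`(N - Nᵀ) *ᵥ X` to the Magnus representation. -/
noncomputable def genLie (i j : Fin n) : derivedIdeal n :=
  ⟨⁅gen j, gen i⁆, lie_mem_derivedSeries_one _ _⟩

lemma magnusDerived_genLie (i j : Fin n) :
    magnusDerived n (genLie i j) =
      (X j : MvPolynomial (Fin n) ℤ) • Pi.single i 1 -
        (X i : MvPolynomial (Fin n) ℤ) • Pi.single j 1 := by
  simp [magnusDerived, genLie]

lemma sum_smul_magnusDerived_genLie (N : Matrix (Fin n) (Fin n) (MvPolynomial (Fin n) ℤ)) :
    ∑ i, ∑ j, N i j • magnusDerived n (genLie i j) = (N - Nᵀ) *ᵥ X := by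
  ext1 l
  simp [magnusDerived_genLie, Finset.sum_apply, Pi.single_apply, mul_sub, sub_mul,
    Finset.sum_sub_distrib, mulVec, dotProduct]

lemma genLie_jacobi (i j k : Fin n) :
    (X i : MvPolynomial (Fin n) ℤ) • genLie j k + (X j : MvPolynomial (Fin n) ℤ) • genLie k i +
      (X k : MvPolynomial (Fin n) ℤ) • genLie i j = 0 := by
  ext
  simp only [LieSubmodule.coe_add, coe_X_smul, LieSubmodule.coe_zero, genLie]
  rw [add_right_comm]
  exact lie_jacobi _ _ _

/-- The element of `M n` with linear part `a` and commutator coefficients `N`. -/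
noncomputable def ofCoeffs (a : Fin n → ℤ) (N : Matrix (Fin n) (Fin n) (MvPolynomial (Fin n) ℤ)) :
    M n :=
  ∑ i, a i • gen i + (∑ i, ∑ j, N i j • genLie i j : derivedIdeal n)

lemma ofCoeffs_add (a b : Fin n → ℤ) (N N' : Matrix (Fin n) (Fin n) (MvPolynomial (Fin n) ℤ)) :
    ofCoeffs (a + b) (N + N') = ofCoeffs a N + ofCoeffs b N' := by
  simp only [ofCoeffs, Pi.add_apply, Matrix.add_apply, add_smul, Finset.sum_add_distrib,
    LieSubmodule.coe_add]
  abel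

lemma gen_lie_ofCoeffs (i : Fin n) (a : Fin n → ℤ)
    (N : Matrix (Fin n) (Fin n) (MvPolynomial (Fin n) ℤ)) :
    ⁅(gen i : M n), ofCoeffs a N⁆ =
      ofCoeffs 0 ((X i : MvPolynomial (Fin n) ℤ) • N + vecMulVec (C ∘ a) (Pi.single i 1)) := by
  have hlie (j : Fin n) : ⁅(gen i : M n), gen j⁆ = genLie j i := rfl
  have hrow (j : Fin n) :
      ∑ k, (vecMulVec (C ∘ a) (Pi.single i 1) j k : MvPolynomial (Fin n) ℤ) • genLie j k =
        a j • genLie j i := by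
    simp [vecMulVec_apply, Pi.single_apply, ite_smul, Int.cast_smul_eq_zsmul]
  simp only [ofCoeffs, lie_add, lie_sum, lie_zsmul, hlie, ← coe_X_smul]
  simp only [Pi.zero_apply, zero_smul, Finset.sum_const_zero, zero_add, Matrix.add_apply, add_smul,
    Matrix.smul_apply, smul_eq_mul, mul_smul, Finset.sum_add_distrib, hrow, ← Finset.smul_sum]
  rw [LieSubmodule.coe_add, add_comm, AddSubmonoidClass.coe_finsetSum]
  rfl

theorem exists_ofCoeffs_eq (z : M n) : ∃ a N, ofCoeffs a N = z := by
  let φ : (Fin n → ℤ) × Matrix (Fin n) (Fin n) (MvPolynomial (Fin n) ℤ) →+ M n :=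
    AddMonoidHom.mk' (fun x ↦ ofCoeffs x.1 x.2) fun x y ↦ ofCoeffs_add x.1 y.1 x.2 y.2
  have hφ (z) : z ∈ φ.range ↔ ∃ a N, ofCoeffs a N = z := Prod.exists
  rw [← hφ, addSubgroup_eq_top (N := φ.range) (fun i ↦ ?_) fun i z hz ↦ ?_]
  · trivial
  · exact (hφ _).2 ⟨Pi.single i 1, 0, by simp [ofCoeffs, Pi.single_apply]⟩
  · obtain ⟨a, N, rfl⟩ := (hφ _).1 hz
    exact (hφ _).2 ⟨_, _, (gen_lie_ofCoeffs i a N).symm⟩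

theorem magnus_ofCoeffs (a : Fin n → ℤ) (N : Matrix (Fin n) (Fin n) (MvPolynomial (Fin n) ℤ)) :
    magnus n (ofCoeffs a N) = ⟨a, C ∘ a + (N - Nᵀ) *ᵥ X⟩ := by
  rw [ofCoeffs, map_add, magnus_coe_derivedIdeal, ← sum_smul_magnusDerived_genLie]
  ext l : 2
  · simp [Pi.single_apply]
  · simp [Pi.single_apply]

theorem magnus_injective (n : ℕ) : Function.Injective (magnus n) := by
  refine (injective_iff_map_eq_zero _).2 fun z hz ↦ ?_
  obtain ⟨a, N, rfl⟩ := exists_ofCoeffs_eq z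
  rw [magnus_ofCoeffs] at hz
  obtain rfl : a = 0 := congrArg SplitExtension.fst hz
  have hN : (N - Nᵀ) *ᵥ X = 0 := by simpa using congrArg SplitExtension.snd hz
  have hsum := isKoszulExactTwo_X ℤ n (derivedIdeal n) genLie (fun i ↦ Subtype.ext (lie_self _))
    (fun i j ↦ Subtype.ext (lie_skew _ _).symm) genLie_jacobi N hN
  simp [ofCoeffs, hsum]

theorem mem_range_magnus_iff {x : MagnusRing (Fin n)} :
    x ∈ Set.range (magnus n) ↔ x.snd ⬝ᵥ X = linearForm (Fin n) x.fst := by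
  constructor
  · rintro ⟨z, rfl⟩
    obtain ⟨a, N, rfl⟩ := exists_ofCoeffs_eq z
    rw [magnus_ofCoeffs, add_dotProduct, sub_transpose_mulVec_dotProduct, add_zero,
      linearForm_apply]
  · intro hx
    obtain ⟨N, hN⟩ := isKoszulExactOne_X ℤ n (x.snd - C ∘ x.fst) <| by
      rw [sub_dotProduct, hx, linearForm_apply, sub_self]
    exact ⟨ofCoeffs x.fst N, by rw [magnus_ofCoeffs, ← hN, add_sub_cancel]⟩

end MagnusEmbedding

section Counting

lemma card_forall_inl_eq {ι κ μ R : Type*} [Finite μ] (e : κ ⊕ μ ≃ ι) (p : κ → R) :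
    Nat.card {s : ι → R // ∀ j, s (e (.inl j)) = p j} = Nat.card R ^ Nat.card μ := by
  rw [← Nat.card_fun]
  exact Nat.card_congr
    { toFun s i := s.1 (e (.inr i))
      invFun t := ⟨Sum.elim p t ∘ e.symm, by simp⟩
      left_inv s := by
        refine Subtype.ext (funext (e.forall_congr_right.1 ?_))
        rintro (j | i) <;> simp [s.2]
      right_inv t := by simp }

variable {n : ℕ}

theorem bijective_lift_of_isFreeGenSet {h : Fin n → M n} (hh : IsFreeGenSet n h) {L : Type}
    [LieRing L] [LieAlgebra ℤ L] (hL : IsMetabelian L) :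
    Function.Bijective fun (r : Fin n → L) (i : Fin n) ↦ lift hL r (h i) := by
  constructor
  · intro r s hrs
    have hlift : lift hL r = lift hL s :=
      (hh L hL fun i ↦ lift hL s (h i)).unique (congrFun hrs) fun _ ↦ rfl
    ext i
    rw [← lift_gen hL r, hlift, lift_gen]
  · intro f
    obtain ⟨φ, hφ, -⟩ := hh L hL f
    exact ⟨fun i ↦ φ (gen i), funext fun i ↦ by beta_reduce; rw [← eq_lift φ hL, hφ]⟩

theorem isUniformlyDistributed_of_isPrimitiveSystem {k : ℕ} {hk : k ≤ n}
    {g : Fin k → FreeLieAlgebra ℤ (Fin n)} (hg : IsPrimitiveSystem n k hk fun j ↦ mkM n (g j)) :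
    IsUniformlyDistributed n k g := by
  intro R _ _ _ hR p
  obtain ⟨h, hh, hhg⟩ := hg
  obtain ⟨m, rfl⟩ := Nat.exists_eq_add_of_le hk
  let e := Equiv.ofBijective _ (bijective_lift_of_isFreeGenSet hh hR)
  have he (r : Fin (k + m) → R) (j : Fin k) :
      e r (finSumFinEquiv (.inl j)) = FreeLieAlgebra.lift ℤ r (g j) :=
    congrArg (lift hR r) (hhg j)
  simp only [← he]
  rw [Nat.card_congr (e.subtypeEquiv fun _ ↦ Iff.rfl : _ ≃ {s : Fin (k + m) → R //
    ∀ j, s (finSumFinEquiv (.inl j)) = p j}), card_forall_inl_eq]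
  simp

-- A fibre of `T a` is empty or a coset of the kernel, so all the comparisons of fibres with
-- kernels must be equalities.
theorem surjective_of_card_fiber_eq {α V U : Type*} [Finite α] [Finite V] [AddGroup V] [AddGroup U]
    {T : α → V →+ U}
    (h : ∀ q, Nat.card {x : α × V // T x.1 x.2 = q} = Nat.card {x : α × V // T x.1 x.2 = 0})
    (a : α) : Function.Surjective (T a) := by
  intro q
  have := Fintype.ofFinite α
  have hsum (q : U) : Nat.card {x : α × V // T x.1 x.2 = q} =
      ∑ a, Nat.card {v // T a v = q} := by
    rw [Nat.card_congr (Equiv.subtypeProdEquivSigmaSubtype fun a v ↦ T a v = q), Nat.card_sigma]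
  have hle (a : α) : Nat.card {v // T a v = q} ≤ Nat.card {v // T a v = 0} := by
    rcases isEmpty_or_nonempty {v // T a v = q} with hempty | ⟨⟨w, hw⟩⟩
    · simp
    · refine Nat.card_le_card_of_injective (fun v ↦ ⟨v.1 - w, by simp [v.2, hw]⟩) ?_
      exact fun v v' hvv' ↦ Subtype.ext (sub_left_injective (congrArg Subtype.val hvv'))
  have heq : Nat.card {v // T a v = q} = Nat.card {v // T a v = 0} :=
    (Finset.sum_eq_sum_iff_of_le fun a _ ↦ hle a).1 (by rw [← hsum, ← hsum, h]) a
      (Finset.mem_univ a)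
  have hpos : 0 < Nat.card {v // T a v = q} := by
    rw [heq]
    have : Nonempty {v // T a v = 0} := ⟨0, map_zero _⟩
    exact Nat.card_pos
  obtain ⟨v, hv⟩ := (Nat.card_pos_iff.1 hpos).1
  exact ⟨v, hv⟩

end Counting

section ResidueFields

lemma isJacobsonRing_int : IsJacobsonRing ℤ := by
  refine isJacobsonRing_iff_prime_eq.2 fun P hP ↦ ?_
  rcases eq_or_ne P ⊥ with rfl | hP0
  · refine eq_bot_iff.2 fun x hx ↦ ?_
    have hunit : IsUnit (x * 3 + 1) := Ideal.mem_jacobson_bot.1 hx 3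
    rw [Ideal.mem_bot]
    rcases Int.isUnit_iff.1 hunit with h | h <;> omega
  · have := hP.isMaximal hP0
    exact Ideal.jacobson_eq_self_of_isMaximal

theorem finite_of_finiteType_int (F : Type*) [Field F] [inst : Algebra ℤ F]
    [Algebra.FiniteType ℤ F] : Finite F := by
  obtain rfl : inst = Ring.toIntAlgebra F := Subsingleton.elim _ _
  have := isJacobsonRing_int
  have := finite_of_finite_type_of_isJacobsonRing ℤ F
  have hinj : ¬ Function.Injective (algebraMap ℤ F) := fun h ↦
    Int.not_isField (isField_of_isIntegral_of_isField h (Field.toIsField F))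
  obtain ⟨p, hp, hp0⟩ : ∃ p : ℤ, (p : F) = 0 ∧ p ≠ 0 := by
    rw [injective_iff_map_eq_zero] at hinj
    push Not at hinj
    exact hinj
  refine Module.finite_of_fg_torsion F fun {x} ↦ ⟨⟨p, mem_nonZeroDivisors_of_ne_zero hp0⟩, ?_⟩
  exact (zsmul_eq_mul x p).trans (by rw [hp, zero_mul])

theorem exists_mul_eq_one_of_surjective_mulVec_quotient {R κ ι : Type*} [CommRing R] [Finite κ]
    [DecidableEq κ] [Fintype ι] {J : Matrix κ ι R}
    (hJ : ∀ I : Ideal R, I.IsMaximal →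
      Function.Surjective (J.map (Ideal.Quotient.mk I)).mulVec) :
    ∃ K : Matrix ι κ R, J * K = 1 := by
  have := Fintype.ofFinite κ
  rw [← mulVec_surjective_iff_exists_right_inverse]
  change Function.Surjective J.mulVecLin
  refine LinearMap.range_eq_top.1 <| (eq_top_or_exists_le_coatom _).resolve_right ?_
  rintro ⟨N, hN, hle⟩
  have hsimple : IsSimpleModule R ((κ → R) ⧸ N) := isSimpleModule_iff_isCoatom.2 hN
  set I := Module.annihilator R ((κ → R) ⧸ N)
  have hI : I.IsMaximal := IsSimpleModule.annihilator_isMaximal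
  have hIN (c : R) (hc : c ∈ I) (y : κ → R) : c • y ∈ N := by
    rw [← Submodule.Quotient.mk_eq_zero, Submodule.Quotient.mk_smul]
    exact Module.mem_annihilator.1 hc _
  refine hN.1 (eq_top_iff.2 fun y _ ↦ ?_)
  obtain ⟨v, hv⟩ := hJ I hI (Ideal.Quotient.mk I ∘ y)
  obtain ⟨x, rfl⟩ := Ideal.Quotient.mk_surjective.comp_left v
  have hyx (j : κ) : (y - J *ᵥ x) j ∈ I := by
    rw [← Ideal.Quotient.eq_zero_iff_mem, Pi.sub_apply, map_sub, map_mulVec]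
    exact sub_eq_zero.2 (congrFun hv j).symm
  have hmem : y - J *ᵥ x ∈ N := by
    rw [pi_eq_sum_univ' (y - J *ᵥ x)]
    exact N.sum_mem fun j _ ↦ hIN _ (hyx j) _
  exact (N.sub_mem_iff_left (hle ⟨x, rfl⟩)).1 hmem

end ResidueFields

section Jacobian

open MvPolynomial

variable {n : ℕ} {κ : Type*}

/-- The coefficient matrix of the linear parts of a system in the free metabelian Lie ring. -/
noncomputable def linearPart (g : κ → M n) : Matrix κ (Fin n) ℤ := .of fun j ↦ (magnus n (g j)).fst

/-- The matrix of Fox derivatives of a system in the free metabelian Lie ring. -/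
noncomputable def jacobian (g : κ → M n) : Matrix κ (Fin n) (MvPolynomial (Fin n) ℤ) :=
  .of fun j ↦ (magnus n (g j)).snd

lemma jacobian_mulVec_X (g : κ → M n) : jacobian g *ᵥ X = (linearPart g).map C *ᵥ X :=
  funext fun j ↦ mem_range_magnus_iff.1 ⟨g j, rfl⟩

-- Fox calculus: evaluating at `a + ε v`, with `ε` spanning the abelian ideal, differentiates.
lemma lift_splitExtension {F : Type*} [CommRing F] (g : κ → M n) (a v : Fin n → F) (j : κ) :
    lift (SplitExtension.isMetabelian (AddMonoidHom.id F) F) (fun i ↦ ⟨a i, v i⟩) (g j) =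
      ⟨((linearPart g).map Int.cast *ᵥ a) j, ((jacobian g).map (aeval a) *ᵥ v) j⟩ := by
  rw [← magnusMap_comp_magnus]
  ext
  · simp [linearPart, mulVec, dotProduct]
  · rfl

theorem surjective_jacobian_mulVec {k : ℕ} {g : Fin k → FreeLieAlgebra ℤ (Fin n)}
    (hg : IsUniformlyDistributed n k g) {F : Type} [CommRing F] [Finite F] (a : Fin n → F) :
    Function.Surjective ((jacobian fun j ↦ mkM n (g j)).map (aeval a)).mulVec := by
  set G : Fin k → M n := fun j ↦ mkM n (g j)
  set p : Fin k → F := (linearPart G).map Int.cast *ᵥ a with hp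
  let E := SplitExtension (AddMonoidHom.id F) F
  have := Fintype.ofFinite E
  let T (b : {b : Fin n → F // (linearPart G).map Int.cast *ᵥ b = p}) :
      (Fin n → F) →+ (Fin k → F) :=
    ((jacobian G).map (aeval b.1)).mulVecLin.toAddMonoidHom
  have hcard (q : Fin k → F) :
      Nat.card {x : _ × (Fin n → F) // T x.1 x.2 = q} = Fintype.card E ^ (n - k) := by
    rw [← hg E (SplitExtension.isMetabelian _ F) fun j ↦ ⟨p j, q j⟩]
    refine Nat.card_congr
      { toFun x := ⟨fun i ↦ ⟨x.1.1.1 i, x.1.2 i⟩, fun j ↦ ?_⟩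
        invFun r := ⟨⟨⟨fun i ↦ (r.1 i).fst, ?_⟩, fun i ↦ (r.1 i).snd⟩, ?_⟩ }
    · exact (lift_splitExtension G x.1.1.1 x.1.2 j).trans <|
        SplitExtension.ext (congrFun x.1.1.2 j) (congrFun x.2 j)
    · exact funext fun j ↦ congrArg SplitExtension.fst <|
        (lift_splitExtension G _ _ j).symm.trans (r.2 j)
    · exact funext fun j ↦ congrArg SplitExtension.snd <|
        (lift_splitExtension G _ _ j).symm.trans (r.2 j)
  exact surjective_of_card_fiber_eq (T := T) (fun q ↦ (hcard q).trans (hcard 0).symm) ⟨a, hp.symm⟩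

theorem exists_jacobian_mul_eq_one {k : ℕ} {g : Fin k → FreeLieAlgebra ℤ (Fin n)}
    (hg : IsUniformlyDistributed n k g) :
    ∃ K : Matrix (Fin n) (Fin k) (MvPolynomial (Fin n) ℤ),
      (jacobian fun j ↦ mkM n (g j)) * K = 1 := by
  refine exists_mul_eq_one_of_surjective_mulVec_quotient fun I hI ↦ ?_
  let := Ideal.Quotient.field I
  have := finite_of_finiteType_int (MvPolynomial (Fin n) ℤ ⧸ I)
  have haeval : ⇑(aeval fun i ↦ Ideal.Quotient.mk I (X i)) = Ideal.Quotient.mk I :=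
    congrArg DFunLike.coe (a₂ := Ideal.Quotient.mkₐ ℤ I) <|
      MvPolynomial.algHom_ext fun i ↦ aeval_X _ i
  rw [← haeval]
  exact surjective_jacobian_mulVec hg fun i ↦ Ideal.Quotient.mk I (X i)

end Jacobian

section Automorphism

open MvPolynomial

variable {n : ℕ} {D : GL (Fin n) (MvPolynomial (Fin n) ℤ)} {B : GL (Fin n) ℤ}

theorem isFreeGenSet_comp {h : Fin n → M n} (hh : IsFreeGenSet n h) {φ : M n →ₗ⁅ℤ⁆ M n}
    (hφ : Function.Bijective φ) : IsFreeGenSet n (φ ∘ h) := by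
  intro L _ _ hL f
  let e := LieEquiv.ofBijective φ hφ
  obtain ⟨ψ, hψ, hψ'⟩ := hh L hL f
  refine ⟨ψ.comp e.symm.toLieHom, fun i ↦ ?_, fun χ hχ ↦ ?_⟩
  · refine (congrArg ψ (e.symm_apply_apply (h i))).trans (hψ i)
  · ext z
    obtain ⟨w, rfl⟩ := hφ.2 z
    refine (DFunLike.congr_fun (hψ' (χ.comp φ) hχ) w).trans ?_
    exact (congrArg ψ (e.symm_apply_apply w)).symm

lemma bijective_vecMul {ι R : Type*} [Fintype ι] [DecidableEq ι] [CommRing R] (G : GL ι R) :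
    Function.Bijective fun v : ι → R ↦ v ᵥ* G.1 :=
  ⟨vecMul_injective_of_isUnit G.isUnit, vecMul_surjective_iff_isUnit.2 G.isUnit⟩

/-- The endomorphism of the Magnus ring sending the `i`-th Magnus generator to the pair of the
`i`-th rows of `B` and `D`. -/
noncomputable def magnusRowMap (B : Matrix (Fin n) (Fin n) ℤ)
    (D : Matrix (Fin n) (Fin n) (MvPolynomial (Fin n) ℤ)) :
    MagnusRing (Fin n) →ₗ⁅ℤ⁆ MagnusRing (Fin n) :=
  magnusMap (linearForm (Fin n)) B.row D.row

lemma fst_magnusRowMap (B : Matrix (Fin n) (Fin n) ℤ)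
    (D : Matrix (Fin n) (Fin n) (MvPolynomial (Fin n) ℤ)) (x : MagnusRing (Fin n)) :
    (magnusRowMap B D x).fst = x.fst ᵥ* B :=
  (fst_magnusMap _ _ _ x).trans (vecMul_eq_sum _ _).symm

lemma exists_snd_magnusRowMap_eq (B : GL (Fin n) ℤ) :
    ∃ φ : MvPolynomial (Fin n) ℤ ≃ₐ[ℤ] MvPolynomial (Fin n) ℤ,
      (∀ a, φ (linearForm (Fin n) a) = linearForm (Fin n) (a ᵥ* B.1)) ∧
        ∀ (D : Matrix (Fin n) (Fin n) (MvPolynomial (Fin n) ℤ)) (x : MagnusRing (Fin n)),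
          (magnusRowMap B.1 D x).snd = (φ ∘ x.snd) ᵥ* D := by
  obtain ⟨φ, hφ⟩ := exists_algEquiv_X_eq B
  have hφ' (p) : aeval (linearForm (Fin n) ∘ B.1.row) p = φ p :=
    DFunLike.congr_fun (f := aeval _) (g := φ.toAlgHom)
      (MvPolynomial.algHom_ext fun i ↦ (aeval_X _ i).trans (hφ i).symm) p
  refine ⟨φ, fun a ↦ ?_, fun D x ↦ ?_⟩
  · rw [← hφ', vecMul_eq_sum]
    exact aeval_linearForm _ _ a
  · rw [vecMul_eq_sum]
    exact (snd_magnusMap _ _ _ x).trans <|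
      Finset.sum_congr rfl fun i _ ↦ congrArg (· • D i) (hφ' (x.snd i))

theorem bijective_magnusRowMap (B : GL (Fin n) ℤ) (D : GL (Fin n) (MvPolynomial (Fin n) ℤ)) :
    Function.Bijective (magnusRowMap B.1 D.1) := by
  obtain ⟨φ, -, hφ⟩ := exists_snd_magnusRowMap_eq B
  have hΘ (x) : magnusRowMap B.1 D.1 x = ⟨x.fst ᵥ* B.1, (φ ∘ x.snd) ᵥ* D.1⟩ :=
    SplitExtension.ext (fst_magnusRowMap _ _ x) (hφ _ x)
  constructor
  · intro x y hxy
    rw [hΘ, hΘ, SplitExtension.mk.injEq] at hxy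
    exact SplitExtension.ext ((bijective_vecMul B).1 hxy.1)
      (φ.injective.comp_left ((bijective_vecMul D).1 hxy.2))
  · rintro ⟨a, v⟩
    obtain ⟨a, rfl⟩ := (bijective_vecMul B).2 a
    obtain ⟨v, rfl⟩ := (bijective_vecMul D).2 v
    obtain ⟨v, rfl⟩ := φ.surjective.comp_left v
    exact ⟨⟨a, v⟩, hΘ _⟩

theorem magnusRowMap_mem_range_magnus_iff (hDB : D.1 *ᵥ X = B.1.map C *ᵥ X)
    {x : MagnusRing (Fin n)} :
    magnusRowMap B.1 D.1 x ∈ Set.range (magnus n) ↔ x ∈ Set.range (magnus n) := by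
  obtain ⟨φ, hφlin, hφ⟩ := exists_snd_magnusRowMap_eq B
  have hφX : (fun i ↦ φ (X i)) = B.1.map C *ᵥ X := by
    ext1 i
    rw [← linearForm_single, hφlin, single_one_vecMul]
    rfl
  have hsnd : (magnusRowMap B.1 D.1 x).snd ⬝ᵥ X = φ (x.snd ⬝ᵥ X) := by
    rw [hφ, ← dotProduct_mulVec, hDB, map_dotProduct, hφX]
    rfl
  rw [mem_range_magnus_iff, mem_range_magnus_iff, hsnd, fst_magnusRowMap, ← hφlin,
    φ.injective.eq_iff]

theorem isFreeGenSet_of_magnus_eq (hDB : D.1 *ᵥ X = B.1.map C *ᵥ X) {h : Fin n → M n}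
    (hh : ∀ i, magnus n (h i) = ⟨B.1.row i, D.1.row i⟩) : IsFreeGenSet n h := by
  let φ := lift (isMetabelian_M n) h
  have hcomm (z : M n) : magnus n (φ z) = magnusRowMap B.1 D.1 (magnus n z) := by
    have hcomp : (magnus n).comp φ = (magnusRowMap B.1 D.1).comp (magnus n) := by
      rw [magnusRowMap, magnusMap_comp_magnus]
      exact hom_ext fun i ↦ by simp [φ, hh]
    exact DFunLike.congr_fun hcomp z
  have hφ : Function.Bijective φ := by
    constructor
    · intro z w hzw
      apply magnus_injective n
      apply (bijective_magnusRowMap B D).1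
      rw [← hcomm, ← hcomm, hzw]
    · intro z
      obtain ⟨x, hx⟩ := (bijective_magnusRowMap B D).2 (magnus n z)
      obtain ⟨w, rfl⟩ := (magnusRowMap_mem_range_magnus_iff hDB).1 ⟨z, hx.symm⟩
      exact ⟨w, magnus_injective n ((hcomm w).trans hx)⟩
  convert isFreeGenSet_comp (isFreeGenSet_gen n) hφ using 1
  ext1 i
  exact (lift_gen _ h i).symm

theorem exists_isFreeGenSet (hDB : D.1 *ᵥ X = B.1.map C *ᵥ X) : ∃ h : Fin n → M n,
    IsFreeGenSet n h ∧ ∀ i, magnus n (h i) = ⟨B.1.row i, D.1.row i⟩ := by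
  choose h hh using fun i ↦
    (mem_range_magnus_iff (x := ⟨B.1.row i, D.1.row i⟩)).2 (congrFun hDB i)
  exact ⟨h, isFreeGenSet_of_magnus_eq hDB hh, hh⟩

theorem isPrimitiveSystem_of_jacobian_mul_eq_one {k : ℕ} (hk : k ≤ n) {g : Fin k → M n}
    {K : Matrix (Fin n) (Fin k) (MvPolynomial (Fin n) ℤ)} (hK : jacobian g * K = 1) :
    IsPrimitiveSystem n k hk g := by
  obtain ⟨m, rfl⟩ := Nat.exists_eq_add_of_le hk
  obtain ⟨D, B, hDB, hD, hB⟩ :=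
    exists_rows_eq_of_mulVec_X_eq finSumFinEquiv hK (jacobian_mulVec_X g)
  obtain ⟨h, hfree, hh⟩ := exists_isFreeGenSet hDB
  refine ⟨h, hfree, fun j ↦ magnus_injective _ ?_⟩
  exact (hh _).trans (SplitExtension.ext (hB j) (hD j))

end Automorphism

end FreeMetabelian

/-- **main theorem.** A system of elements `g₁,…,g_k` (`1 ≤ k ≤ n`) of the
free metabelian Lie ring `M` on `n` generators is primitive iff it is uniformly
distributed on the variety of metabelian Lie rings. -/
theorem primitive_iff_uniformly_distributed (n k : ℕ) (hk1 : 1 ≤ k) (hk : k ≤ n)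
    (g : Fin k → FreeLieAlgebra ℤ (Fin n)) :
    IsPrimitiveSystem n k hk (fun j => mkM n (g j)) ↔
      IsUniformlyDistributed n k g := by
  refine ⟨FreeMetabelian.isUniformlyDistributed_of_isPrimitiveSystem, fun hg ↦ ?_⟩
  obtain ⟨K, hK⟩ := FreeMetabelian.exists_jacobian_mul_eq_one hg
  exact FreeMetabelian.isPrimitiveSystem_of_jacobian_mul_eq_one hk hK
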